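/- Let d ≥ 1 and let G_1=(V_1,E_1),…,G_d=(V_d,E_d) be finite simple connected graphs with totally ordered vertex sets, and 𝒢 = G_1×…×G_d. Then the graded piece Chow^{d+1}(𝒢) of the combinatorial Chow ring is a free ℤ-module of rank |E_1|·|E_2|⋯|E_d|, i.e., Chow^{d+1}(𝒢) ≅ ℤ^{|ℰ|} where ℰ = E_1×…×E_d; the isomorphism is given by the restriction maps to the d-dimensional cubes □_e, e ∈ ℰ, each of whose top graded pieces Chow^{d+1}(□_e) is free of rank one. -/

import Mathlib

/-!
The degree-`(d+1)` piece is spanned by one class per cube, and degree functionals on the cubes show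
that these classes are independent.

*Spanning.* Modulo the relations (R1) only monomials supported on simplices survive. A monomial with a
repeated vertex is rewritten, through (R2) and (R3), as a combination of monomials with more distinct
vertices (`mon_mem_of_duplicate`). Hence the monomials with `d + 1` distinct vertices span, and such a
simplex moves each coordinate exactly once, along an edge: it is a maximal chain (a *flag*) of some
cube `□_e` (`exists_flag_of_nodup`). Two flags of the same cube that differ in one vertex are
identified by the difference of two relations (R3) (`mon_flagList_swap`). As adjacent transpositions
generate the symmetric group, each cube contributes a single class `gen e`.

*Independence.* The Chow ring of the cube `{0,1}^d` carries a functional that takes the value `1` on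
the standard flag (`exists_degree`). It is built by forgetting one coordinate at a time: a class on
`{0,1}^(d+1)` is restricted to the edge over each vertex `v` of `{0,1}^d`, where it becomes a polynomial
`f_v(t)`, and the pushforward is `-∑ C_v · f_v[0, C_v, -T_v]`, with a second divided difference and with
`T_v` the sum of the `C_u`, `u > v`. Most relations vanish on each edge; the relation (R3) in the
forgotten direction becomes a sum of end-point differences `f_v(C_v) - f_v(0)`, which cancel since the
intervals `(a, b]` and `[a, b)` of the Boolean lattice have the same number of elements
(`push_eq_zero_of_mem`). Composing with the restriction to `□_e` yields functionals `edgeDegree e`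
dual to the classes `gen e`.

Both halves apply to the cube `□_e` itself, which has only one tuple of edges. Its top piece is
therefore free of rank one, and restriction to it multiplies the generator by `edgeDegree e`.
-/

open MvPolynomial

namespace ChowGS

variable {d : ℕ}

section General

variable (V : Fin d → Type) [∀ i, Fintype (V i)] [∀ i, LinearOrder (V i)]
variable (G : ∀ i, SimpleGraph (V i))

abbrev GV : Type := ∀ i, V i

def OneSimplex (u v : GV V) : Prop :=
  u ≤ v ∧ ∀ i, u i = v i ∨ (G i).Adj (u i) (v i)

def Iset (u v : GV V) : Finset (Fin d) :=
  Finset.univ.filter fun i => u i < v i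

def IsSimplexChain {k : ℕ} (σ : Fin (k + 1) → GV V) : Prop :=
  Monotone σ ∧
  (∀ j : Fin k, OneSimplex V G (σ j.castSucc) (σ j.succ)) ∧
  ∀ j j' : Fin k, j ≠ j' →
    Disjoint (Iset V (σ j.castSucc) (σ j.succ)) (Iset V (σ j'.castSucc) (σ j'.succ))

def FormsSimplex (l : List (GV V)) : Prop :=
  ∃ (k : ℕ) (σ : Fin (k + 1) → GV V), IsSimplexChain V G σ ∧ l.Subperm (List.ofFn σ)

noncomputable def Irat : Ideal (MvPolynomial (GV V) ℤ) :=
  Ideal.span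
    ({ p | ∃ l : List (GV V), ¬ FormsSimplex V G l ∧ p = (l.map X).prod } ∪
     { p | ∃ u : GV V, p = X u * ∑ v : GV V, X v } ∪
     { p | ∃ u w : GV V, ∃ i : Fin d, u i ≠ w i ∧
         p = X u * X w * ∑ v ∈ Finset.univ.filter (fun v : GV V => v i = u i), X v })

abbrev Chow : Type := MvPolynomial (GV V) ℤ ⧸ Irat V G

noncomputable def mkChow : MvPolynomial (GV V) ℤ →ₐ[ℤ] Chow V G :=
  Ideal.Quotient.mkₐ ℤ (Irat V G)

noncomputable def chowPiece (n : ℕ) : Submodule ℤ (Chow V G) :=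
  Submodule.map (mkChow V G).toLinearMap (homogeneousSubmodule (GV V) ℤ n)

/-- An (oriented) edge of `G i`: a pair of adjacent vertices listed in increasing order. -/
abbrev EdgeT (i : Fin d) : Type := {p : V i × V i // p.1 < p.2 ∧ (G i).Adj p.1 p.2}

/-- The family of two-element vertex sets determined by a tuple of edges `e ∈ ℰ`. -/
def cubeSet (e : ∀ i, EdgeT V G i) : ∀ i, Finset (V i) :=
  fun i => {(e i).1.1, (e i).1.2}

/-- Vertices of the sub-product determined by the finsets `S i`. -/
abbrev SubV (S : ∀ i, Finset (V i)) (i : Fin d) : Type := {x : V i // x ∈ S i}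

/-- The induced subgraph of `G i` on `S i`. -/
def SubG (S : ∀ i, Finset (V i)) (i : Fin d) : SimpleGraph (SubV V S i) :=
  (G i).comap Subtype.val

/-- Restriction `ι*` from the polynomial ring of the full product to the one of a
sub-product: `C_v ↦ C_v` if `v` lies in the sub-product and `C_v ↦ 0` otherwise. -/
noncomputable def resTop (S : ∀ i, Finset (V i)) :
    MvPolynomial (GV V) ℤ →ₐ[ℤ] MvPolynomial (∀ i, SubV V S i) ℤ :=
  aeval fun v : GV V =>
    if h : ∀ i, v i ∈ S i then X (fun i => (⟨v i, h i⟩ : SubV V S i)) else 0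

/-- Restriction between two sub-products. -/
noncomputable def resSub (S S' : ∀ i, Finset (V i)) :
    MvPolynomial (∀ i, SubV V S i) ℤ →ₐ[ℤ] MvPolynomial (∀ i, SubV V S' i) ℤ :=
  aeval fun u : ∀ i, SubV V S i =>
    if h : ∀ i, (u i : V i) ∈ S' i then X (fun i => (⟨(u i : V i), h i⟩ : SubV V S' i)) else 0

end General
end ChowGS

namespace ChowCube

/-! ### Divided differences -/

/-- The coefficients `0, 0, 1, w + y, w² + wy + y², …`: the `k`-th one is the complete homogeneous
polynomial of degree `k - 2` in `w, y`, the second divided difference of `X ^ k` at `0, w, y`. -/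
def ddCoeff {A : Type} [CommRing A] (w y : A) : ℕ → A
  | 0 => 0
  | k + 1 => y * ddCoeff w y k + if k = 0 then 0 else w ^ (k - 1)

/-- The second divided difference `f[0, w, y]`. It is written through the coefficients of `f`, so
that it makes sense over any commutative ring, where `w` and `y` need not be invertible. -/
noncomputable def dd {A : Type} [CommRing A] (w y : A) : Polynomial A →ₗ[A] A :=
  (Polynomial.basisMonomials A).constr A (ddCoeff w y)

theorem dd_monomial {A : Type} [CommRing A] (w y a : A) (k : ℕ) :
    dd w y (Polynomial.monomial k a) = a * ddCoeff w y k := by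
  have h : Polynomial.monomial k a = a • Polynomial.basisMonomials A k := by
    simp [Polynomial.smul_monomial]
  rw [h, map_smul, dd, Module.Basis.constr_basis, smul_eq_mul]

/-- Multiplying by `X - y` turns `f[0, w, y]` into the first divided difference `f[0, w]`; the
factor `w` clears its denominator. -/
theorem mul_dd_mul_sub {A : Type} [CommRing A] (w y : A) (f : Polynomial A) :
    w * dd w y (f * (Polynomial.X - Polynomial.C y)) = f.eval w - f.eval 0 := by
  induction f using Polynomial.induction_on' with
  | add p q hp hq => simp only [add_mul, map_add, mul_add, hp, hq, Polynomial.eval_add]; ring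
  | monomial k a =>
    rw [mul_sub, Polynomial.monomial_mul_X, Polynomial.monomial_mul_C, map_sub, dd_monomial,
      dd_monomial, ddCoeff]
    rcases k with _ | k
    · simp [ddCoeff]
    · simp [Polynomial.eval_monomial]
      ring

theorem dd_C_mul {A : Type} [CommRing A] (w y a : A) (f : Polynomial A) :
    dd w y (Polynomial.C a * f) = a * dd w y f := by
  rw [← Polynomial.smul_eq_C_mul, map_smul, smul_eq_mul]

/-! ### The Chow ring of the cube -/

/-- The relations between the vertices of the cube `{0,1}^d`. Pairwise incomparability suffices for
the monomial relations, since a set of vertices of a cube is a simplex iff it is a chain. -/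
noncomputable def cubeIdeal (d : ℕ) : Ideal (MvPolynomial (Fin d → Bool) ℤ) :=
  Ideal.span
    ({ p | ∃ u w : Fin d → Bool, ¬ u ≤ w ∧ ¬ w ≤ u ∧ p = X u * X w } ∪
     { p | ∃ u : Fin d → Bool, p = X u * ∑ v, X v } ∪
     { p | ∃ u w : Fin d → Bool, ∃ i, u i ≠ w i ∧
         p = X u * X w * ∑ v ∈ Finset.univ.filter (fun v : Fin d → Bool => v i = u i), X v })

/-- The combinatorial Chow ring of the cube `{0,1}^d`. -/
def CubeRing (d : ℕ) : Type := MvPolynomial (Fin d → Bool) ℤ ⧸ cubeIdeal d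

noncomputable instance (d : ℕ) : CommRing (CubeRing d) :=
  inferInstanceAs (CommRing (MvPolynomial (Fin d → Bool) ℤ ⧸ cubeIdeal d))

/-- The quotient map onto the Chow ring of the cube. -/
noncomputable def cubeMk (d : ℕ) : MvPolynomial (Fin d → Bool) ℤ →+* CubeRing d :=
  Ideal.Quotient.mk (cubeIdeal d)

theorem cubeMk_eq_zero_iff {d : ℕ} {p : MvPolynomial (Fin d → Bool) ℤ} :
    cubeMk d p = 0 ↔ p ∈ cubeIdeal d :=
  Ideal.Quotient.eq_zero_iff_mem

theorem cubeMk_surjective (d : ℕ) : Function.Surjective (cubeMk d) :=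
  Ideal.Quotient.mk_surjective

theorem exists_lift {d : ℕ} {M : Type} [AddCommGroup M]
    (f : MvPolynomial (Fin d → Bool) ℤ →ₗ[ℤ] M) (h : ∀ p ∈ cubeIdeal d, f p = 0) :
    ∃ f' : CubeRing d →ₗ[ℤ] M, ∀ p, f' (cubeMk d p) = f p := by
  have hker : (cubeMk d).toAddMonoidHom.ker ≤ f.toAddMonoidHom.ker := fun p hp =>
    h p (cubeMk_eq_zero_iff.1 hp)
  refine ⟨(AddMonoidHom.liftOfSurjective (cubeMk d).toAddMonoidHom (cubeMk_surjective d)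
    ⟨f.toAddMonoidHom, hker⟩).toIntLinearMap, fun p => ?_⟩
  exact AddMonoidHom.liftOfRightInverse_comp_apply _ _
    (Function.rightInverse_surjInv (cubeMk_surjective d)) ⟨f.toAddMonoidHom, hker⟩ p

/-- The class of the vertex `u` of the cube. -/
noncomputable def cls {d : ℕ} (u : Fin d → Bool) : CubeRing d :=
  cubeMk d (X u)

theorem cls_mul_of_incomp {d : ℕ} {u w : Fin d → Bool} (h : ¬ u ≤ w) (h' : ¬ w ≤ u) :
    cls u * cls w = 0 := by
  rw [cls, cls, ← map_mul, cubeMk_eq_zero_iff]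
  exact Ideal.subset_span (Or.inl (Or.inl ⟨u, w, h, h', rfl⟩))

theorem cls_mul_sum {d : ℕ} (u : Fin d → Bool) : cls u * ∑ v, cls v = 0 := by
  simp only [cls]
  rw [← map_sum, ← map_mul, cubeMk_eq_zero_iff]
  exact Ideal.subset_span (Or.inl (Or.inr ⟨u, rfl⟩))

theorem cls_mul_cls_mul_sum {d : ℕ} {u w : Fin d → Bool} {i : Fin d} (h : u i ≠ w i) :
    cls u * cls w * ∑ v, (if v i = u i then cls v else 0) = 0 := by
  simp only [cls]
  rw [← Finset.sum_filter, ← map_sum, ← map_mul, ← map_mul, cubeMk_eq_zero_iff]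
  exact Ideal.subset_span (Or.inr ⟨u, w, i, h, rfl⟩)

/-! ### The pushforward along a coordinate projection -/

open Classical in
/-- The restriction of a class on `{0,1}^(d+1)` to the edge lying over the vertex `v` of `{0,1}^d`
(the projection forgets the coordinate `0`). The vertices `(1, v)` and `(0, v)` become `t` and
`C_v - t`, with `t` a formal variable; the vertices `(1, u)` with `u > v` and `(0, u)` with `u < v`
become `C_u`; all others vanish. -/
noncomputable def rho {d : ℕ} (v : Fin d → Bool) :
    MvPolynomial (Fin (d + 1) → Bool) ℤ →ₐ[ℤ] Polynomial (CubeRing d) :=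
  aeval fun q =>
    if q 0 = true then
      if v < Fin.tail q then Polynomial.C (cls (Fin.tail q))
      else if Fin.tail q = v then Polynomial.X else 0
    else
      if Fin.tail q < v then Polynomial.C (cls (Fin.tail q))
      else if Fin.tail q = v then Polynomial.C (cls v) - Polynomial.X else 0

open Classical in
theorem rho_true {d : ℕ} (v u : Fin d → Bool) :
    rho v (X (Fin.cons true u : Fin (d + 1) → Bool)) =
      if v < u then Polynomial.C (cls u) else if u = v then Polynomial.X else 0 := by
  simp [rho]

open Classical in
theorem rho_false {d : ℕ} (v u : Fin d → Bool) :
    rho v (X (Fin.cons false u : Fin (d + 1) → Bool)) =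
      if u < v then Polynomial.C (cls u)
      else if u = v then Polynomial.C (cls v) - Polynomial.X else 0 := by
  simp [rho]

theorem sum_cons {d : ℕ} {M : Type} [AddCommMonoid M] (f : (Fin (d + 1) → Bool) → M) :
    ∑ q, f q = ∑ u : Fin d → Bool,
      (f (Fin.cons true u : Fin (d + 1) → Bool) + f (Fin.cons false u : Fin (d + 1) → Bool)) := by
  rw [← (Fin.consEquiv fun _ : Fin (d + 1) => Bool).sum_comp, Fintype.sum_prod_type,
    Fintype.sum_bool, Finset.sum_add_distrib]
  rfl

/-- After multiplication by `C_v`, the two vertices over `u` together restrict to the pullback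
of `C_u`. -/
theorem C_mul_rho_add {d : ℕ} (v u : Fin d → Bool) :
    Polynomial.C (cls v) * (rho v (X (Fin.cons true u : Fin (d + 1) → Bool)) +
      rho v (X (Fin.cons false u : Fin (d + 1) → Bool))) = Polynomial.C (cls v * cls u) := by
  classical
  rw [rho_true, rho_false]
  by_cases h1 : v < u
  · simp [h1, h1.not_gt, h1.ne']
  by_cases h2 : u = v
  · subst h2; simp
  by_cases h3 : u < v
  · simp [h1, h2, h3]
  · have := cls_mul_of_incomp (u := v) (w := u) (fun h => h1 (lt_of_le_of_ne h (Ne.symm h2)))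
      (fun h => h3 (lt_of_le_of_ne h h2))
    simp [h1, h2, h3, this]

theorem C_mul_rho_sum {d : ℕ} (v : Fin d → Bool) :
    Polynomial.C (cls v) * rho v (∑ q, X q) = 0 := by
  rw [sum_cons, map_sum, Finset.mul_sum]
  simp only [map_add, C_mul_rho_add]
  rw [← map_sum, ← Finset.mul_sum, cls_mul_sum, map_zero]

theorem C_mul_rho_sum_succ {d : ℕ} (v : Fin d → Bool) (i : Fin d) (b : Bool) :
    Polynomial.C (cls v) * rho v (∑ q ∈ Finset.univ.filter
      (fun q : Fin (d + 1) → Bool => q i.succ = b), X q) =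
    Polynomial.C (cls v * ∑ u, if u i = b then cls u else 0) := by
  rw [Finset.sum_filter, sum_cons, map_sum, Finset.mul_sum, Finset.mul_sum, map_sum]
  refine Finset.sum_congr rfl fun u _ => ?_
  simp only [Fin.cons_succ]
  split_ifs
  · rw [map_add, C_mul_rho_add]
  · simp

open Classical in
/-- The sum of the classes of the vertices strictly above `v`. -/
noncomputable def tailSum {d : ℕ} (v : Fin d → Bool) : CubeRing d :=
  ∑ u, if v < u then cls u else 0

theorem rho_sum_true {d : ℕ} (v : Fin d → Bool) :
    rho v (∑ q ∈ Finset.univ.filter (fun q : Fin (d + 1) → Bool => q 0 = true), X q) =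
      Polynomial.X - Polynomial.C (-tailSum v) := by
  classical
  rw [Finset.sum_filter, sum_cons, map_sum]
  simp only [Fin.cons_zero, if_true, Bool.false_eq_true, if_false, add_zero, rho_true]
  have : ∀ u : Fin d → Bool, (if v < u then Polynomial.C (cls u)
      else if u = v then Polynomial.X else 0) =
      Polynomial.C (if v < u then cls u else 0) + if u = v then Polynomial.X else 0 := by
    intro u
    by_cases h : v < u
    · simp [h, h.ne']
    · simp [h]
  simp only [this, Finset.sum_add_distrib, tailSum, Finset.sum_ite_eq', Finset.mem_univ, if_true,
    map_neg, map_sum]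
  ring

/-- The pushforward along the projection `{0,1}^(d+1) → {0,1}^d` forgetting the coordinate `0`:
the sum over the vertices `v` of `-C_v · f_v[0, C_v, -T_v]`, where `f_v(t)` is the restriction of the
class to the edge over `v` and `T_v` is `tailSum v`. The node `-T_v` is the root of the linear
polynomial to which the sum of all `(1, u)` restricts, see `rho_sum_true`. -/
noncomputable def push (d : ℕ) : MvPolynomial (Fin (d + 1) → Bool) ℤ →ₗ[ℤ] CubeRing d :=
  -∑ v, (LinearMap.mulLeft ℤ (cls v)) ∘ₗ (dd (cls v) (-tailSum v)).restrictScalars ℤ ∘ₗ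
    (rho v).toLinearMap

theorem push_apply {d : ℕ} (p : MvPolynomial (Fin (d + 1) → Bool) ℤ) :
    push d p = -∑ v, cls v * dd (cls v) (-tailSum v) (rho v p) := by
  simp [push]

theorem push_eq_zero {d : ℕ} (p : MvPolynomial (Fin (d + 1) → Bool) ℤ)
    (h : ∀ v, Polynomial.C (cls v) * rho v p = 0) : push d p = 0 := by
  rw [push_apply, neg_eq_zero]
  refine Finset.sum_eq_zero fun v _ => ?_
  rw [← dd_C_mul, h, map_zero]

open Classical in
theorem eval_cls_rho {d : ℕ} (v : Fin d → Bool) (b : Bool) (u : Fin d → Bool) :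
    (rho v (X (Fin.cons b u : Fin (d + 1) → Bool))).eval (cls v) =
      if (if b = true then v ≤ u else u < v) then cls u else 0 := by
  cases b
  · rw [rho_false]
    by_cases h1 : u < v
    · simp [h1]
    by_cases h2 : u = v <;> simp [h1, h2]
  · rw [rho_true]
    by_cases h1 : v < u
    · simp [h1, h1.le]
    by_cases h2 : u = v
    · simp [h2]
    · have : ¬ v ≤ u := fun h => h1 (lt_of_le_of_ne h (Ne.symm h2))
      simp [h1, h2, this]

open Classical in
theorem eval_zero_rho {d : ℕ} (v : Fin d → Bool) (b : Bool) (u : Fin d → Bool) :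
    (rho v (X (Fin.cons b u : Fin (d + 1) → Bool))).eval 0 =
      if (if b = true then v < u else u ≤ v) then cls u else 0 := by
  cases b
  · rw [rho_false]
    by_cases h1 : u < v
    · simp [h1, h1.le]
    by_cases h2 : u = v
    · simp [h2]
    · have : ¬ u ≤ v := fun h => h1 (lt_of_le_of_ne h h2)
      simp [h1, h2, this]
  · rw [rho_true]
    by_cases h1 : v < u
    · simp [h1]
    by_cases h2 : u = v <;> simp [h1, h2]

open Classical in
/-- The intervals `(a, b]` and `[a, b)` of the Boolean lattice are exchanged by complementation
in `[a, b]`. -/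
theorem card_Ioc_eq_card_Ico {d : ℕ} (a b : Fin d → Bool) :
    (Finset.univ.filter fun v => a < v ∧ v ≤ b).card =
      (Finset.univ.filter fun v => a ≤ v ∧ v < b).card := by
  by_cases hab : a ≤ b
  · have key : ∀ v, a ≤ v → v ≤ b → a ⊔ b \ (a ⊔ b \ v) = v := by
      intro v h1 h2
      rw [sdiff_sup, sdiff_sdiff_right_self, inf_eq_right.2 h2, sup_inf_left, sup_sdiff_self,
        sup_eq_right.2 hab, sup_eq_right.2 h1, inf_eq_right.2 h2]
    have hle : ∀ v, a ⊔ b \ v ≤ b := fun v => sup_le hab sdiff_le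
    refine Finset.card_bij' (fun v _ => a ⊔ b \ v) (fun v _ => a ⊔ b \ v) ?_ ?_ ?_ ?_
    · intro v hv
      simp only [Finset.mem_filter, Finset.mem_univ, true_and] at hv ⊢
      refine ⟨le_sup_left, lt_of_le_of_ne (hle v) fun h => hv.1.ne' ?_⟩
      rw [← key v hv.1.le hv.2, h, sdiff_self, sup_bot_eq]
    · intro v hv
      simp only [Finset.mem_filter, Finset.mem_univ, true_and] at hv ⊢
      refine ⟨lt_of_le_of_ne le_sup_left fun h => hv.2.ne ?_, hle v⟩
      rw [← key v hv.1 hv.2.le, ← h, sup_sdiff_self, sup_eq_right.2 hab]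
    · intro v hv
      simp only [Finset.mem_filter, Finset.mem_univ, true_and] at hv
      exact key v hv.1.le hv.2
    · intro v hv
      simp only [Finset.mem_filter, Finset.mem_univ, true_and] at hv
      exact key v hv.1 hv.2.le
  · rw [Finset.filter_false_of_mem, Finset.filter_false_of_mem]
    · exact fun v _ h => hab (h.1.trans h.2.le)
    · exact fun v _ h => hab (h.1.le.trans h.2)

theorem ite_mul_ite_of_imp {A : Type} [CommRing A] {P Q : Prop} [Decidable P] [Decidable Q]
    (h : Q → P) (x y : A) :
    (if P then x else 0) * (if Q then y else 0) = x * if Q then y else 0 := by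
  by_cases hQ : Q
  · simp [hQ, h hQ]
  · simp [hQ]

theorem ite_mul_ite_of_mul_eq_zero {A : Type} [CommRing A] (P Q : Prop) [Decidable P]
    [Decidable Q] {x y : A} (h : x * y = 0) :
    (if P then x else 0) * (if Q then y else 0) = 0 := by
  split_ifs <;> simp [h]

/-- Two vertices of the same half of the cube merge into one, uniformly in `v`: at both evaluation
points of `bdry` their product is a constant multiple of the restriction of a single vertex. -/
theorem exists_merge {d : ℕ} (b : Bool) (r u : Fin d → Bool) :
    ∃ (c : CubeRing d) (s : Fin d → Bool), ∀ v : Fin d → Bool,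
      (rho v (X (Fin.cons b r : Fin (d + 1) → Bool))).eval (cls v) *
        (rho v (X (Fin.cons b u : Fin (d + 1) → Bool))).eval (cls v) =
        c * (rho v (X (Fin.cons b s : Fin (d + 1) → Bool))).eval (cls v) ∧
      (rho v (X (Fin.cons b r : Fin (d + 1) → Bool))).eval 0 *
        (rho v (X (Fin.cons b u : Fin (d + 1) → Bool))).eval 0 =
        c * (rho v (X (Fin.cons b s : Fin (d + 1) → Bool))).eval 0 := by
  classical
  -- for comparable `r` and `u`, the condition attached to one implies that of the other
  have key : ∀ r u : Fin d → Bool, (if b = true then u ≤ r else r ≤ u) → ∀ v : Fin d → Bool,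
      (rho v (X (Fin.cons b r : Fin (d + 1) → Bool))).eval (cls v) *
        (rho v (X (Fin.cons b u : Fin (d + 1) → Bool))).eval (cls v) =
        cls r * (rho v (X (Fin.cons b u : Fin (d + 1) → Bool))).eval (cls v) ∧
      (rho v (X (Fin.cons b r : Fin (d + 1) → Bool))).eval 0 *
        (rho v (X (Fin.cons b u : Fin (d + 1) → Bool))).eval 0 =
        cls r * (rho v (X (Fin.cons b u : Fin (d + 1) → Bool))).eval 0 := by
    intro r u h v
    simp only [eval_cls_rho, eval_zero_rho]
    refine ⟨ite_mul_ite_of_imp ?_ _ _, ite_mul_ite_of_imp ?_ _ _⟩ <;> cases b <;>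
      simp only [Bool.false_eq_true, if_true, if_false] at h ⊢ <;> intro h'
    · exact h.trans_lt h'
    · exact h'.trans h
    · exact h.trans h'
    · exact h'.trans_le h
  by_cases h1 : if b = true then u ≤ r else r ≤ u
  · exact ⟨_, _, key r u h1⟩
  by_cases h2 : if b = true then r ≤ u else u ≤ r
  · refine ⟨cls u, r, fun v => ?_⟩
    have := key u r h2 v
    exact ⟨by rw [mul_comm, this.1], by rw [mul_comm, this.2]⟩
  · have h0 : cls r * cls u = 0 := by
      cases b <;> simp only [Bool.false_eq_true, if_true, if_false] at h1 h2
      · exact cls_mul_of_incomp h1 h2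
      · exact cls_mul_of_incomp h2 h1
    refine ⟨0, u, fun v => ?_⟩
    simp only [eval_cls_rho, eval_zero_rho, zero_mul]
    exact ⟨ite_mul_ite_of_mul_eq_zero _ _ h0, ite_mul_ite_of_mul_eq_zero _ _ h0⟩

/-- The sum over all `v` of the differences between the restriction to the two ends `t = C_v`
and `t = 0` of the edge over `v`. -/
noncomputable def bdry {d : ℕ} (p : MvPolynomial (Fin (d + 1) → Bool) ℤ) : CubeRing d :=
  ∑ v, ((rho v p).eval (cls v) - (rho v p).eval 0)

open Classical in
/-- Merging the factors of `g` into the last two reduces to `g = 1`, where the two ends contribute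
`C_u C_{u'}` once for each element of `(u, u']` and of `[u, u')` respectively. -/
theorem bdry_X_mul_X {d : ℕ} (g : MvPolynomial (Fin (d + 1) → Bool) ℤ) :
    ∀ u u' : Fin d → Bool, bdry (g * (X (Fin.cons false u : Fin (d + 1) → Bool) *
      X (Fin.cons true u' : Fin (d + 1) → Bool))) = 0 := by
  induction g using MvPolynomial.induction_on with
  | C a =>
    intro u u'
    have h1 : ∀ v : Fin d → Bool,
        (rho v (X (Fin.cons false u : Fin (d + 1) → Bool) *
          X (Fin.cons true u' : Fin (d + 1) → Bool))).eval (cls v) =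
        if u < v ∧ v ≤ u' then cls u * cls u' else 0 := by
      intro v
      rw [map_mul, Polynomial.eval_mul, eval_cls_rho, eval_cls_rho]
      by_cases h : u < v <;> by_cases h' : v ≤ u' <;> simp [h, h']
    have h2 : ∀ v : Fin d → Bool,
        (rho v (X (Fin.cons false u : Fin (d + 1) → Bool) *
          X (Fin.cons true u' : Fin (d + 1) → Bool))).eval 0 =
        if u ≤ v ∧ v < u' then cls u * cls u' else 0 := by
      intro v
      rw [map_mul, Polynomial.eval_mul, eval_zero_rho, eval_zero_rho]
      by_cases h : u ≤ v <;> by_cases h' : v < u' <;> simp [h, h']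
    have h3 : bdry (X (Fin.cons false u : Fin (d + 1) → Bool) *
          X (Fin.cons true u' : Fin (d + 1) → Bool)) = 0 := by
      simp only [bdry, h1, h2]
      rw [Finset.sum_sub_distrib, ← Finset.sum_filter, ← Finset.sum_filter, Finset.sum_const,
        Finset.sum_const, card_Ioc_eq_card_Ico, sub_self]
    have h4 : ∀ p : MvPolynomial (Fin (d + 1) → Bool) ℤ, bdry (C a * p) = a • bdry p := by
      intro p
      simp only [bdry, ← MvPolynomial.smul_eq_C_mul, map_smul, Finset.smul_sum, smul_sub,
        Polynomial.eval_smul]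
    rw [h4, h3, smul_zero]
  | add p q hp hq =>
    intro u u'
    have : ∀ p q : MvPolynomial (Fin (d + 1) → Bool) ℤ, bdry (p + q) = bdry p + bdry q := by
      intro p q
      simp only [bdry, map_add, Polynomial.eval_add, ← Finset.sum_add_distrib]
      exact Finset.sum_congr rfl fun v _ => by ring
    rw [add_mul, this, hp, hq, add_zero]
  | mul_X g q ih =>
    intro u u'
    obtain ⟨b, r, rfl⟩ : ∃ (b : Bool) (r : Fin d → Bool), q = Fin.cons b r :=
      ⟨q 0, Fin.tail q, (Fin.cons_self_tail q).symm⟩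
    -- each of the two cases replaces the product of two adjacent variables by one
    have step : ∀ (F F' : MvPolynomial (Fin (d + 1) → Bool) ℤ) (c : CubeRing d),
        (∀ v : Fin d → Bool, (rho v F).eval (cls v) = c * (rho v F').eval (cls v)) →
        (∀ v : Fin d → Bool, (rho v F).eval 0 = c * (rho v F').eval 0) →
        bdry F' = 0 → bdry F = 0 := by
      intro F F' c h1 h2 h3
      simp only [bdry, h1, h2, ← mul_sub, ← Finset.mul_sum]
      rw [bdry] at h3
      rw [h3, mul_zero]
    cases b
    · obtain ⟨c, s, h⟩ := exists_merge false r u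
      refine step _ _ c (fun v => ?_) (fun v => ?_) (ih s u') <;>
        simp only [map_mul, Polynomial.eval_mul]
      · linear_combination ((rho v g).eval (cls v) *
          (rho v (X (Fin.cons true u' : Fin (d + 1) → Bool))).eval (cls v)) * (h v).1
      · linear_combination ((rho v g).eval 0 *
          (rho v (X (Fin.cons true u' : Fin (d + 1) → Bool))).eval 0) * (h v).2
    · obtain ⟨c, s, h⟩ := exists_merge true r u'
      refine step _ _ c (fun v => ?_) (fun v => ?_) (ih u s) <;>
        simp only [map_mul, Polynomial.eval_mul]
      · linear_combination ((rho v g).eval (cls v) *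
          (rho v (X (Fin.cons false u : Fin (d + 1) → Bool))).eval (cls v)) * (h v).1
      · linear_combination ((rho v g).eval 0 *
          (rho v (X (Fin.cons false u : Fin (d + 1) → Bool))).eval 0) * (h v).2

theorem push_mul_sum_true {d : ℕ} (p : MvPolynomial (Fin (d + 1) → Bool) ℤ) :
    push d (p * ∑ q ∈ Finset.univ.filter (fun q : Fin (d + 1) → Bool => q 0 = true), X q) =
      -bdry p := by
  rw [push_apply, bdry]
  congr 1
  refine Finset.sum_congr rfl fun v _ => ?_
  rw [map_mul, rho_sum_true, mul_dd_mul_sub]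

theorem push_mul_sum {d : ℕ} (p : MvPolynomial (Fin (d + 1) → Bool) ℤ) :
    push d (p * ∑ q, X q) = 0 := by
  refine push_eq_zero _ fun v => ?_
  rw [map_mul, mul_left_comm, C_mul_rho_sum, mul_zero]

theorem rho_eq_zero_or {d : ℕ} (v : Fin d → Bool) (b : Bool) (u : Fin d → Bool) :
    rho v (X (Fin.cons b u : Fin (d + 1) → Bool)) = 0 ∨
      rho v (X (Fin.cons b u : Fin (d + 1) → Bool)) = Polynomial.C (cls u) ∨ u = v := by
  classical
  cases b
  · rw [rho_false]; split_ifs <;> simp_all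
  · rw [rho_true]; split_ifs <;> simp_all

theorem rho_true_of_not_le {d : ℕ} {v u : Fin d → Bool} (h : ¬ v ≤ u) :
    rho v (X (Fin.cons true u : Fin (d + 1) → Bool)) = 0 := by
  classical
  rw [rho_true, if_neg fun h' => h h'.le, if_neg fun h' => h h'.ge]

theorem rho_false_of_not_le {d : ℕ} {v u : Fin d → Bool} (h : ¬ u ≤ v) :
    rho v (X (Fin.cons false u : Fin (d + 1) → Bool)) = 0 := by
  classical
  rw [rho_false, if_neg fun h' => h h'.le, if_neg fun h' => h h'.le]

theorem C_mul_rho_incomp {d : ℕ} (v : Fin d → Bool) {u w : Fin (d + 1) → Bool}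
    (h : ¬ u ≤ w) (h' : ¬ w ≤ u) :
    Polynomial.C (cls v) * (rho v (X u) * rho v (X w)) = 0 := by
  obtain ⟨b, r, rfl⟩ : ∃ (b : Bool) (r : Fin d → Bool), u = Fin.cons b r :=
    ⟨u 0, Fin.tail u, (Fin.cons_self_tail u).symm⟩
  obtain ⟨c, s, rfl⟩ : ∃ (b : Bool) (r : Fin d → Bool), w = Fin.cons b r :=
    ⟨w 0, Fin.tail w, (Fin.cons_self_tail w).symm⟩
  rw [Fin.cons_le_cons] at h h'
  by_cases hrs : r ≤ s
  · obtain ⟨rfl, rfl⟩ : b = true ∧ c = false := by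
      cases b <;> cases c <;> simp_all
    have hsr : ¬ s ≤ r := fun hh => h' ⟨by simp, hh⟩
    by_cases h1 : v ≤ r
    · rw [rho_false_of_not_le fun h2 => hsr (h2.trans h1), mul_zero, mul_zero]
    · rw [rho_true_of_not_le h1, zero_mul, mul_zero]
  by_cases hsr : s ≤ r
  · obtain ⟨rfl, rfl⟩ : c = true ∧ b = false := by
      cases b <;> cases c <;> simp_all
    by_cases h1 : v ≤ s
    · rw [rho_false_of_not_le fun h2 => hrs (h2.trans h1), zero_mul, mul_zero]
    · rw [rho_true_of_not_le h1, mul_zero, mul_zero]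
  have h0 := cls_mul_of_incomp hrs hsr
  rcases rho_eq_zero_or v b r with h1 | h1 | h1
  · rw [h1, zero_mul, mul_zero]
  · rcases rho_eq_zero_or v c s with h2 | h2 | h2
    · rw [h2, mul_zero, mul_zero]
    · rw [h1, h2, ← map_mul, h0, map_zero, mul_zero]
    · rw [h1, ← h2, ← mul_assoc, ← map_mul, mul_comm (cls s), h0, map_zero, zero_mul]
  · rcases rho_eq_zero_or v c s with h2 | h2 | h2
    · rw [h2, mul_zero, mul_zero]
    · rw [h2, ← h1, mul_left_comm, ← map_mul, h0, map_zero, mul_zero]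
    · exact absurd (h1.trans h2.symm).le hrs

/-- The pushforward respects the third family of relations in the directions other than `0`. -/
theorem C_mul_rho_mul_rho_mul_sum_succ {d : ℕ} (v : Fin d → Bool) {u w : Fin (d + 1) → Bool}
    {i : Fin d} (h : u i.succ ≠ w i.succ) :
    Polynomial.C (cls v) * (rho v (X u) * rho v (X w) * rho v (∑ q ∈ Finset.univ.filter
      (fun q : Fin (d + 1) → Bool => q i.succ = u i.succ), X q)) = 0 := by
  obtain ⟨b, r, rfl⟩ : ∃ (b : Bool) (r : Fin d → Bool), u = Fin.cons b r :=
    ⟨u 0, Fin.tail u, (Fin.cons_self_tail u).symm⟩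
  obtain ⟨c, s, rfl⟩ : ∃ (b : Bool) (r : Fin d → Bool), w = Fin.cons b r :=
    ⟨w 0, Fin.tail w, (Fin.cons_self_tail w).symm⟩
  rw [mul_left_comm, C_mul_rho_sum_succ]
  simp only [Fin.cons_succ] at h ⊢
  have hrs := cls_mul_cls_mul_sum h
  rw [map_mul]
  rcases rho_eq_zero_or v b r with h1 | h1 | h1
  · rw [h1, zero_mul, zero_mul]
  · rcases rho_eq_zero_or v c s with h2 | h2 | h2
    · rw [h2, mul_zero, zero_mul]
    · rw [h1, h2, mul_left_comm, ← map_mul, ← map_mul, hrs, map_zero, mul_zero]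
    · rw [h1, ← h2, mul_right_comm, ← mul_assoc, ← map_mul, ← map_mul, hrs, map_zero, zero_mul]
  · rcases rho_eq_zero_or v c s with h2 | h2 | h2
    · rw [h2, mul_zero, zero_mul]
    · rw [h2, ← h1, mul_assoc, ← mul_assoc (Polynomial.C (cls s)), ← map_mul, ← map_mul,
        mul_comm (cls s), hrs, map_zero, mul_zero]
    · exact absurd (by rw [h1, h2]) h

/-- The pushforward is well defined on Chow rings. All generating relations except the third family
in the direction `0` vanish after restriction to each edge; that one needs the cancellation between
neighbouring edges in `bdry_X_mul_X`. -/
theorem push_eq_zero_of_mem {d : ℕ} {p : MvPolynomial (Fin (d + 1) → Bool) ℤ}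
    (hp : p ∈ cubeIdeal (d + 1)) : push d p = 0 := by
  suffices h : ∀ g, push d (g * p) = 0 by simpa using h 1
  rw [cubeIdeal] at hp
  induction hp using Submodule.span_induction with
  | zero => simp
  | add x y _ _ hx hy => intro g; rw [mul_add, map_add, hx, hy, add_zero]
  | smul a x _ hx => intro g; rw [smul_eq_mul, ← mul_assoc, hx]
  | mem x hx =>
    intro g
    rcases hx with (⟨u, w, h, h', rfl⟩ | ⟨u, rfl⟩) | ⟨u, w, i, h, rfl⟩
    · refine push_eq_zero _ fun v => ?_
      rw [map_mul, mul_left_comm, map_mul, C_mul_rho_incomp v h h', mul_zero]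
    · rw [← mul_assoc, push_mul_sum]
    · cases i using Fin.cases with
      | succ i =>
        refine push_eq_zero _ fun v => ?_
        rw [map_mul, mul_left_comm, map_mul, map_mul, C_mul_rho_mul_rho_mul_sum_succ v h, mul_zero]
      | zero =>
        -- the sums over the two halves of the cube add up to the sum over all vertices, whose
        -- multiples push to `0`, so only the half `q 0 = true` has to be treated directly
        have hT : ∀ (r s : Fin d → Bool), push d (g * (X (Fin.cons false r : Fin (d + 1) → Bool) *
            X (Fin.cons true s : Fin (d + 1) → Bool)) * ∑ q ∈ Finset.univ.filter
              (fun q : Fin (d + 1) → Bool => q 0 = true), X q) = 0 := by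
          intro r s
          rw [push_mul_sum_true, bdry_X_mul_X, neg_zero]
        have hF : ∀ (r s : Fin d → Bool), push d (g * (X (Fin.cons false r : Fin (d + 1) → Bool) *
            X (Fin.cons true s : Fin (d + 1) → Bool)) * ∑ q ∈ Finset.univ.filter
              (fun q : Fin (d + 1) → Bool => q 0 = false), X q) = 0 := by
          intro r s
          have h1 := push_mul_sum (g * (X (Fin.cons false r : Fin (d + 1) → Bool) *
            X (Fin.cons true s : Fin (d + 1) → Bool)))
          rw [← Finset.sum_filter_add_sum_filter_not Finset.univ
            (fun q : Fin (d + 1) → Bool => q 0 = true), mul_add, map_add, hT, zero_add] at h1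
          simpa only [Bool.not_eq_true] using h1
        obtain ⟨b, r, rfl⟩ : ∃ (b : Bool) (r : Fin d → Bool), u = Fin.cons b r :=
          ⟨u 0, Fin.tail u, (Fin.cons_self_tail u).symm⟩
        obtain ⟨c, s, rfl⟩ : ∃ (b : Bool) (r : Fin d → Bool), w = Fin.cons b r :=
          ⟨w 0, Fin.tail w, (Fin.cons_self_tail w).symm⟩
        rw [← mul_assoc]
        cases b <;> cases c <;> simp only [Fin.cons_zero, ne_eq, not_true_eq_false] at h ⊢
        · exact hF r s
        · rw [mul_comm (X _) (X _)]
          exact hT s r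

/-! ### The degree functional -/

/-- The `j`-th vertex `(1, …, 1, 0, …, 0)`, with `j` ones, of the standard maximal chain of
`{0,1}^d`. -/
def stdFlag (d : ℕ) (j : Fin (d + 1)) : Fin d → Bool := fun i => decide (i.castSucc < j)

theorem stdFlag_succ_zero (d : ℕ) : stdFlag (d + 1) 0 = Fin.cons false (stdFlag d 0) := by
  funext i
  cases i using Fin.cases <;> simp [stdFlag]

theorem stdFlag_succ_succ (d : ℕ) (j : Fin (d + 1)) :
    stdFlag (d + 1) j.succ = Fin.cons true (stdFlag d j) := by
  funext i
  cases i using Fin.cases with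
  | zero => simp [stdFlag]
  | succ i => simp [stdFlag]

theorem stdFlag_zero (d : ℕ) : stdFlag d 0 = ⊥ := by
  funext i; simp [stdFlag]

theorem stdFlag_ne_bot (d : ℕ) (j : Fin d) : stdFlag d j.succ ≠ ⊥ := by
  intro h
  have := congrFun h j
  simp [stdFlag] at this

/-- Only the edge over the bottom vertex contributes to the pushforward of the standard flag. -/
theorem push_flag (d : ℕ) :
    push d (∏ j, X (stdFlag (d + 1) j)) = ∏ j, cls (stdFlag d j) := by
  classical
  rw [push_apply, Finset.sum_eq_single (⊥ : Fin d → Bool)]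
  · rw [Fin.prod_univ_succ]
    simp only [stdFlag_succ_succ, stdFlag_succ_zero]
    rw [Fin.prod_univ_succ, map_mul (rho _), map_mul (rho _), map_prod (rho _)]
    have h : ∀ j : Fin d, rho ⊥ (X (Fin.cons true (stdFlag d j.succ) : Fin (d + 1) → Bool)) =
        Polynomial.C (cls (stdFlag d j.succ)) := by
      intro j
      rw [rho_true, if_pos (bot_lt_iff_ne_bot.2 (stdFlag_ne_bot d j))]
    rw [Finset.prod_congr rfl fun j _ => h j, ← map_prod, stdFlag_zero, rho_true, rho_false,
      if_neg (lt_irrefl _), if_pos rfl, if_neg (lt_irrefl _), if_pos rfl]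
    rw [← mul_assoc, mul_comm _ (Polynomial.C _), dd_C_mul, sub_mul, map_sub, dd_C_mul,
      ← Polynomial.monomial_one_one_eq_X, Polynomial.monomial_mul_monomial, dd_monomial, dd_monomial, Fin.prod_univ_succ, stdFlag_zero]
    simp [ddCoeff, mul_comm]
  · intro v _ hv
    rw [Fin.prod_univ_succ, Fin.prod_univ_succ]
    simp only [stdFlag_succ_succ, stdFlag_succ_zero, stdFlag_zero]
    rw [map_mul (rho _), map_mul (rho _), rho_true_of_not_le fun h => hv (le_bot_iff.1 h)]
    simp
  · simp

/-- The degree functional, obtained by pushing forward one coordinate at a time down to the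
`0`-dimensional cube, whose Chow ring is `ℤ[C]/(C²)`. -/
theorem exists_degree (d : ℕ) : ∃ deg : CubeRing d →ₗ[ℤ] ℤ, deg (∏ j, cls (stdFlag d j)) = 1 := by
  induction d with
  | zero =>
    obtain ⟨o⟩ : Nonempty (Fin 0 → Bool) := inferInstance
    obtain ⟨deg, h⟩ := exists_lift (d := 0) (lcoeff ℤ (Finsupp.single o 1)) fun p hp => by
      suffices h : ∀ g, lcoeff ℤ (Finsupp.single o 1) (g * p) = 0 by simpa using h 1
      rw [cubeIdeal] at hp
      induction hp using Submodule.span_induction with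
      | zero => simp
      | add x y _ _ hx hy => intro g; rw [mul_add, map_add, hx, hy, add_zero]
      | smul a x _ hx => intro g; rw [smul_eq_mul, ← mul_assoc, hx]
      | mem x hx =>
        intro g
        rcases hx with (⟨u, w, h, h', rfl⟩ | ⟨u, rfl⟩) | ⟨u, w, i, h, rfl⟩
        · exact absurd (Subsingleton.elim u w).le h
        · rw [Fintype.sum_subsingleton _ o, Subsingleton.elim u o, ← mul_assoc, lcoeff_apply,
            ← zero_add (Finsupp.single o 1), coeff_mul_X, coeff_mul_X', if_neg (by simp)]
        · exact i.elim0
    refine ⟨deg, ?_⟩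
    rw [Fin.prod_univ_succ, Fin.prod_univ_zero, mul_one, cls, h, Subsingleton.elim (stdFlag 0 0) o]
    simp
  | succ d ih =>
    obtain ⟨deg, h1⟩ := ih
    obtain ⟨p, hp⟩ := exists_lift (push d) fun p hp => push_eq_zero_of_mem hp
    refine ⟨deg ∘ₗ p, ?_⟩
    simp only [cls]
    rw [LinearMap.comp_apply, ← map_prod, hp, push_flag, h1]

end ChowCube

namespace ChowAux
open ChowGS ChowCube

/-! ### Simplices and the map to the Chow ring of a cube -/

section Simplices
set_option linter.unusedSectionVars false

variable {d : ℕ} {V : Fin d → Type} [∀ i, Fintype (V i)] [∀ i, LinearOrder (V i)]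
variable {G : ∀ i, SimpleGraph (V i)}

theorem comparable_of_formsSimplex {l : List (GV V)} (h : FormsSimplex V G l) {u w : GV V}
    (hu : u ∈ l) (hw : w ∈ l) : u ≤ w ∨ w ≤ u := by
  obtain ⟨k, σ, ⟨mono, -, -⟩, sub⟩ := h
  obtain ⟨a, rfl⟩ := List.mem_ofFn.1 (sub.subset hu)
  obtain ⟨b, rfl⟩ := List.mem_ofFn.1 (sub.subset hw)
  exact (le_total a b).imp (fun h => mono h) (fun h => mono h)

/-- Since the sets of moving coordinates along a simplex are disjoint, each coordinate moves at
most once, along an edge of `G i`. -/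
theorem two_values_of_formsSimplex {l : List (GV V)} (h : FormsSimplex V G l) (i : Fin d) :
    ∃ a b : V i, (a = b ∨ (a < b ∧ (G i).Adj a b)) ∧ ∀ u ∈ l, u i = a ∨ u i = b := by
  obtain ⟨k, σ, ⟨mono, one, disj⟩, sub⟩ := h
  suffices H : ∃ a b : V i, (a = b ∨ (a < b ∧ (G i).Adj a b)) ∧ ∀ m, σ m i = a ∨ σ m i = b by
    obtain ⟨a, b, h1, h2⟩ := H
    refine ⟨a, b, h1, fun u hu => ?_⟩
    obtain ⟨m, rfl⟩ := List.mem_ofFn.1 (sub.subset hu)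
    exact h2 m
  have hstep : ∀ j : Fin k, ¬ σ j.castSucc i < σ j.succ i → σ j.castSucc i = σ j.succ i := by
    intro j hj
    exact le_antisymm (mono (Fin.castSucc_lt_succ).le i) (not_lt.1 hj)
  by_cases hex : ∃ j : Fin k, σ j.castSucc i < σ j.succ i
  · obtain ⟨j, hj⟩ := hex
    have hne : ∀ j' : Fin k, j' ≠ j → σ j'.castSucc i = σ j'.succ i := by
      intro j' hj'
      refine hstep j' fun hlt => ?_
      exact Finset.disjoint_left.1 (disj j' j hj')
        (show i ∈ _ by simpa [Iset] using hlt) (by simpa [Iset] using hj)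
    have key : ∀ m : Fin (k + 1), (m ≤ j.castSucc ∧ σ m i = σ 0 i) ∨
        (j.castSucc < m ∧ σ m i = σ j.succ i) := by
      intro m
      induction m using Fin.induction with
      | zero => exact Or.inl ⟨Fin.zero_le _, rfl⟩
      | succ m ih =>
        by_cases hm : m = j
        · subst hm
          exact Or.inr ⟨Fin.castSucc_lt_succ, rfl⟩
        · have hv : (m : ℕ) ≠ j := fun h => hm (Fin.ext h)
          rcases ih with ⟨h1, h2⟩ | ⟨h1, h2⟩
          · refine Or.inl ⟨?_, by rw [← hne m hm, h2]⟩
            simp only [Fin.le_def, Fin.val_castSucc, Fin.val_succ] at h1 ⊢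
            omega
          · refine Or.inr ⟨?_, by rw [← hne m hm, h2]⟩
            simp only [Fin.lt_def, Fin.val_castSucc, Fin.val_succ] at h1 ⊢
            omega
    have h0 : σ j.castSucc i = σ 0 i := by
      rcases key j.castSucc with h | h
      · exact h.2
      · exact absurd h.1 (lt_irrefl _)
    refine ⟨σ 0 i, σ j.succ i, Or.inr ⟨h0 ▸ hj, ?_⟩, fun m => (key m).imp And.right And.right⟩
    rcases (one j).2 i with h | h
    · exact absurd h hj.ne
    · exact h0 ▸ h
  · push Not at hex
    refine ⟨σ 0 i, σ 0 i, Or.inl rfl, fun m => Or.inl ?_⟩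
    induction m using Fin.induction with
    | zero => rfl
    | succ m ih => rw [← hstep m (hex m).not_gt, ih]

/-- The vertex `u` lies in the cube with opposite corners `lo` and `hi`. -/
def InCube (lo hi : GV V) (u : GV V) : Prop := ∀ i, u i = lo i ∨ u i = hi i

theorem exists_sorted {α : Type} [PartialOrder α] (l : List α)
    (h : ∀ u ∈ l, ∀ w ∈ l, u ≤ w ∨ w ≤ u) : ∃ l' : List α, l'.Perm l ∧ l'.Pairwise (· ≤ ·) := by
  classical
  let r : {x // x ∈ l} → {x // x ∈ l} → Prop := fun a b => a ≤ b
  have : Std.Total r := ⟨fun a b => h a a.2 b b.2⟩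
  have : IsTrans _ r := ⟨fun a b c hab hbc => le_trans hab hbc⟩
  refine ⟨(l.attach.insertionSort r).map Subtype.val, ?_, ?_⟩
  · have := (List.perm_insertionSort r l.attach).map Subtype.val
    rwa [List.attach_map_subtype_val] at this
  · rw [List.pairwise_map]
    exact List.pairwise_insertionSort r l.attach

/-- In a cube every chain is a simplex. -/
theorem formsSimplex_of_comparable {lo hi : GV V} (hlt : ∀ i, lo i < hi i)
    (hadj : ∀ i, (G i).Adj (lo i) (hi i)) {l : List (GV V)} (hl : ∀ u ∈ l, InCube lo hi u)
    (h : ∀ u ∈ l, ∀ w ∈ l, u ≤ w ∨ w ≤ u) : FormsSimplex V G l := by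
  obtain ⟨l', hp, hs⟩ := exists_sorted l h
  rcases l' with _ | ⟨a, t⟩
  · refine ⟨0, fun _ => lo, ⟨fun _ _ _ => le_rfl, fun j => j.elim0, fun j => j.elim0⟩, ?_⟩
    rw [List.nil_perm.1 hp]
    exact List.nil_subperm
  · have hmono : Monotone (a :: t).get := by
      intro x y hxy
      rcases hxy.eq_or_lt with rfl | hlt'
      · exact le_rfl
      · exact List.pairwise_iff_get.1 hs x y hlt'
    have hin : ∀ x, InCube lo hi ((a :: t).get x) := fun x => hl _ (hp.subset (List.get_mem _ x))
    have hval : ∀ x y i, (a :: t).get x i < (a :: t).get y i →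
        (a :: t).get x i = lo i ∧ (a :: t).get y i = hi i := by
      intro x y i hxy
      rcases hin x i with h1 | h1 <;> rcases hin y i with h2 | h2 <;> rw [h1, h2] at hxy
      · exact absurd hxy (lt_irrefl _)
      · exact ⟨h1, h2⟩
      · exact absurd hxy (hlt i).not_gt
      · exact absurd hxy (lt_irrefl _)
    refine ⟨t.length, (a :: t).get, ⟨hmono, fun j => ⟨hmono (Fin.castSucc_lt_succ).le, fun i => ?_⟩,
      ?_⟩, ?_⟩
    · rcases (hmono (Fin.castSucc_lt_succ (i := j)).le i).eq_or_lt with h1 | h1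
      · exact Or.inl h1
      · obtain ⟨h2, h3⟩ := hval _ _ i h1
        right
        rw [h2, h3]
        exact hadj i
    · have key : ∀ j j' : Fin t.length, j < j' →
          Disjoint (Iset V ((a :: t).get j.castSucc) ((a :: t).get j.succ))
            (Iset V ((a :: t).get j'.castSucc) ((a :: t).get j'.succ)) := by
        intro j j' hjj
        rw [Finset.disjoint_left]
        intro i h1 h2
        simp only [Iset, Finset.mem_filter, Finset.mem_univ, true_and] at h1 h2
        have h3 := hmono (show j.succ ≤ j'.castSucc from hjj) i
        rw [(hval _ _ i h1).2, (hval _ _ i h2).1] at h3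
        exact absurd h3 (hlt i).not_ge
      intro j j' hne
      rcases lt_or_gt_of_ne hne with h | h
      · exact key j j' h
      · exact (key j' j h).symm
    · rw [List.ofFn_get]
      exact hp.symm.subperm

theorem mul_dvd_prod_map {α R : Type} [DecidableEq α] [CommRing R] (f : α → R) {l : List α}
    {u w : α} (hu : u ∈ l) (hw : w ∈ l) (h : u ≠ w) : f u * f w ∣ (l.map f).prod := by
  rw [← List.prod_map_erase f hu]
  refine mul_dvd_mul_left _ (List.dvd_prod (List.mem_map_of_mem ?_))
  exact (List.mem_erase_of_ne h.symm).2 hw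

/-- The coordinates in `{0,1}^d` of a vertex of the cube with upper corner `hi`. -/
def bits (hi : GV V) (u : GV V) : Fin d → Bool := fun i => decide (u i = hi i)

theorem bits_le_bits {lo hi : GV V} (hlt : ∀ i, lo i < hi i) {u w : GV V}
    (hu : InCube lo hi u) (hw : InCube lo hi w) (h : bits hi u ≤ bits hi w) : u ≤ w := by
  intro i
  have hi' := h i
  rcases hu i with h1 | h1 <;> rcases hw i with h2 | h2 <;> rw [h1, h2]
  · exact (hlt i).le
  · simp [bits, h1, h2, (hlt i).ne] at hi'
    exact ((show ¬ (true ≤ false) by decide) hi').elim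

open Classical in
theorem sum_inCube {lo hi : GV V} (hlt : ∀ i, lo i < hi i) {M : Type} [AddCommMonoid M]
    (F : (Fin d → Bool) → M) :
    (∑ v : GV V, if InCube lo hi v then F (bits hi v) else 0) = ∑ b, F b := by
  rw [← Finset.sum_filter]
  refine Finset.sum_nbij' (bits hi) (fun b i => if b i = true then hi i else lo i) ?_ ?_ ?_ ?_ ?_
  · simp
  · intro b _
    simp only [Finset.mem_filter, Finset.mem_univ, true_and]
    intro i
    dsimp only
    split_ifs <;> simp
  · intro v hv
    simp only [Finset.mem_filter, Finset.mem_univ, true_and] at hv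
    funext i
    rcases hv i with h | h
    · simp [bits, h, (hlt i).ne]
    · simp [bits, h]
  · intro b _
    funext i
    cases h : b i <;> simp [bits, h, (hlt i).ne]
  · simp

open Classical in
/-- The restriction to the cube with corners `lo` and `hi`, identified with `{0,1}^d`: vertices
outside the cube go to `0`. -/
noncomputable def toCube (lo hi : GV V) : MvPolynomial (GV V) ℤ →ₐ[ℤ] CubeRing d :=
  aeval fun u => if InCube lo hi u then cls (bits hi u) else 0

open Classical in
theorem toCube_X (lo hi u : GV V) :
    toCube lo hi (X u) = if InCube lo hi u then cls (bits hi u) else 0 := by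
  rw [toCube, aeval_X]

/-- Restriction to a cube of `𝒢` is well defined on the Chow ring. -/
theorem toCube_eq_zero {lo hi : GV V} (hlt : ∀ i, lo i < hi i)
    (hadj : ∀ i, (G i).Adj (lo i) (hi i)) {p : MvPolynomial (GV V) ℤ} (hp : p ∈ Irat V G) :
    toCube lo hi p = 0 := by
  classical
  suffices h : Irat V G ≤ RingHom.ker (toCube lo hi) from h hp
  rw [Irat, Ideal.span_le]
  rintro _ ((⟨l, hl, rfl⟩ | ⟨u, rfl⟩) | ⟨u, w, i, h, rfl⟩) <;>
    rw [SetLike.mem_coe, RingHom.mem_ker]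
  · by_cases hin : ∀ u ∈ l, InCube lo hi u
    · have hc : ∃ u ∈ l, ∃ w ∈ l, ¬ u ≤ w ∧ ¬ w ≤ u := by
        by_contra! hc
        refine hl (formsSimplex_of_comparable hlt hadj hin fun u hu w hw => ?_)
        exact or_iff_not_imp_left.2 (hc u hu w hw)
      obtain ⟨u, hu, w, hw, h1, h2⟩ := hc
      have h3 : toCube lo hi (X u * X w) = 0 := by
        rw [map_mul, toCube_X, toCube_X, if_pos (hin u hu), if_pos (hin w hw)]
        exact cls_mul_of_incomp (fun h => h1 (bits_le_bits hlt (hin u hu) (hin w hw) h))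
          (fun h => h2 (bits_le_bits hlt (hin w hw) (hin u hu) h))
      refine zero_dvd_iff.1 (h3 ▸ map_dvd (toCube lo hi) ?_)
      exact mul_dvd_prod_map _ hu hw (fun h => h1 h.le)
    · push Not at hin
      obtain ⟨u, hu, h1⟩ := hin
      have h3 : toCube lo hi (X u) = 0 := by rw [toCube_X, if_neg h1]
      refine zero_dvd_iff.1 (h3 ▸ map_dvd (toCube lo hi) ?_)
      exact List.dvd_prod (List.mem_map_of_mem hu)
  · rw [map_mul, map_sum]
    simp only [toCube_X]
    rw [sum_inCube hlt]
    split_ifs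
    · exact cls_mul_sum _
    · rw [zero_mul]
  · rw [map_mul, map_mul, map_sum, toCube_X, toCube_X]
    by_cases hu : InCube lo hi u
    swap
    · rw [if_neg hu, zero_mul, zero_mul]
    by_cases hw : InCube lo hi w
    swap
    · rw [if_neg hw, mul_zero, zero_mul]
    have hiff : ∀ v, InCube lo hi v → (v i = u i ↔ bits hi v i = bits hi u i) := by
      intro v hv
      rcases hu i with h1 | h1 <;> rcases hv i with h2 | h2 <;>
        simp [bits, h1, h2, (hlt i).ne, (hlt i).ne']
    have hsum : ∑ v ∈ Finset.univ.filter (fun v : GV V => v i = u i), toCube lo hi (X v) =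
        ∑ b : Fin d → Bool, if b i = bits hi u i then cls b else 0 := by
      rw [← sum_inCube hlt, Finset.sum_filter]
      refine Finset.sum_congr rfl fun v _ => ?_
      rw [toCube_X]
      by_cases hv : InCube lo hi v
      · simp only [if_pos hv, hiff v hv]
      · simp [hv]
    rw [hsum, if_pos hu, if_pos hw]
    exact cls_mul_cls_mul_sum fun h' => h ((hiff w hw).2 h'.symm).symm

end Simplices

/-! ### Monomials and flags -/

section Relations
set_option linter.unusedSectionVars false

variable {d : ℕ} {V : Fin d → Type} [∀ i, Fintype (V i)] [∀ i, LinearOrder (V i)]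
variable {G : ∀ i, SimpleGraph (V i)}

variable (V G) in
/-- The class in the Chow ring of the product of the generators listed in `l`. -/
noncomputable def mon (l : List (GV V)) : Chow V G := mkChow V G (l.map X).prod

theorem mkChow_eq_zero_iff {p : MvPolynomial (GV V) ℤ} : mkChow V G p = 0 ↔ p ∈ Irat V G :=
  Ideal.Quotient.eq_zero_iff_mem

theorem mon_perm {l l' : List (GV V)} (h : l.Perm l') : mon V G l = mon V G l' := by
  rw [mon, mon, (h.map _).prod_eq]

theorem mon_eq_zero {l : List (GV V)} (h : ¬ FormsSimplex V G l) : mon V G l = 0 :=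
  mkChow_eq_zero_iff.2 (Ideal.subset_span (Or.inl (Or.inl ⟨l, h, rfl⟩)))

theorem sum_mon_cons (s : Finset (GV V)) (l : List (GV V)) :
    ∑ v ∈ s, mon V G (v :: l) = mkChow V G ((l.map X).prod * ∑ v ∈ s, X v) := by
  rw [Finset.mul_sum, map_sum]
  refine Finset.sum_congr rfl fun v _ => ?_
  rw [mon, List.map_cons, List.prod_cons, mul_comm]

/-- The relations `C_u · ∑ C_v = 0`, multiplied by a monomial containing `C_u`. -/
theorem sum_mon_eq_zero {l : List (GV V)} {u : GV V} (hu : u ∈ l) :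
    ∑ v, mon V G (v :: l) = 0 := by
  rw [sum_mon_cons, mkChow_eq_zero_iff]
  obtain ⟨q, hq⟩ : X u ∣ (l.map (X (R := ℤ))).prod := List.dvd_prod (List.mem_map_of_mem hu)
  rw [hq, mul_right_comm]
  exact Ideal.mul_mem_right _ _ (Ideal.subset_span (Or.inl (Or.inr ⟨u, rfl⟩)))

/-- The relations `C_u C_w · ∑_{v i = u i} C_v = 0`, multiplied by a monomial containing
`C_u C_w`. -/
theorem sum_mon_fiber_eq_zero {l : List (GV V)} {u w : GV V} (hu : u ∈ l) (hw : w ∈ l)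
    {i : Fin d} (h : u i ≠ w i) :
    ∑ v ∈ Finset.univ.filter (fun v : GV V => v i = u i), mon V G (v :: l) = 0 := by
  classical
  rw [sum_mon_cons, mkChow_eq_zero_iff]
  obtain ⟨q, hq⟩ := mul_dvd_prod_map (X (R := ℤ)) hu hw (fun h' => h (by rw [h']))
  rw [hq, mul_right_comm]
  exact Ideal.mul_mem_right _ _ (Ideal.subset_span (Or.inr ⟨u, w, i, h, rfl⟩))

/-- The `j`-th vertex of the maximal chain of the cube `[lo, hi]` that changes the coordinates in
the order `π 0, π 1, …`. -/
def flagV (lo hi : GV V) (π : Equiv.Perm (Fin d)) (j : Fin (d + 1)) : GV V :=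
  fun i => if (π.symm i).castSucc < j then hi i else lo i

/-- The list of all vertices of the flag `flagV lo hi π`. -/
def flagList (lo hi : GV V) (π : Equiv.Perm (Fin d)) : List (GV V) :=
  (List.finRange (d + 1)).map (flagV lo hi π)

theorem flagV_inCube (lo hi : GV V) (π : Equiv.Perm (Fin d)) (j : Fin (d + 1)) :
    InCube lo hi (flagV lo hi π j) := by
  intro i
  unfold flagV
  split_ifs <;> simp

theorem flagV_zero (lo hi : GV V) (π : Equiv.Perm (Fin d)) : flagV lo hi π 0 = lo := by
  funext i
  simp [flagV]

theorem flagV_last (lo hi : GV V) (π : Equiv.Perm (Fin d)) :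
    flagV lo hi π (Fin.last d) = hi := by
  funext i
  simp [flagV, Fin.castSucc_lt_last]

theorem bits_flagV {lo hi : GV V} (hlt : ∀ i, lo i < hi i) (j : Fin (d + 1)) :
    bits hi (flagV lo hi 1 j) = stdFlag d j := by
  funext i
  have h1 : (1 : Equiv.Perm (Fin d)).symm i = i := rfl
  by_cases h : i.castSucc < j <;> simp [bits, flagV, stdFlag, h, h1, (hlt i).ne]

theorem toCube_flag {lo hi : GV V} (hlt : ∀ i, lo i < hi i) :
    toCube lo hi ((flagList lo hi 1).map X).prod = ∏ j, cls (stdFlag d j) := by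
  classical
  rw [map_list_prod, flagList, List.map_map, List.map_map, ← List.ofFn_eq_map, List.prod_ofFn]
  refine Finset.prod_congr rfl fun j _ => ?_
  simp only [Function.comp]
  rw [toCube_X, if_pos (flagV_inCube _ _ _ _), bits_flagV hlt]

theorem toCube_flag_of_not {lo hi lo' hi' : GV V} (h : ¬ (InCube lo hi lo' ∧ InCube lo hi hi')) :
    toCube lo hi ((flagList lo' hi' 1).map X).prod = 0 := by
  classical
  have key : ∀ j, ¬ InCube lo hi (flagV lo' hi' 1 j) →
      toCube lo hi ((flagList lo' hi' 1).map X).prod = 0 := by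
    intro j hj
    have h3 : toCube lo hi (X (flagV lo' hi' 1 j)) = 0 := by rw [toCube_X, if_neg hj]
    refine zero_dvd_iff.1 (h3 ▸ map_dvd (toCube lo hi) ?_)
    exact List.dvd_prod (List.mem_map_of_mem (List.mem_map_of_mem (List.mem_finRange j)))
  rw [not_and_or] at h
  rcases h with h | h
  · exact key 0 (by rwa [flagV_zero])
  · exact key (Fin.last d) (by rwa [flagV_last])

end Relations

/-! ### Independence of the flag -/

section Adjacent
set_option linter.unusedSectionVars false

variable {n : ℕ} {V : Fin (n + 1) → Type} [∀ i, Fintype (V i)] [∀ i, LinearOrder (V i)]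
variable {G : ∀ i, SimpleGraph (V i)}

/-- The flag `flagV lo hi π` with its vertex at level `k + 1` removed. -/
def restList (lo hi : GV V) (π : Equiv.Perm (Fin (n + 1))) (k : Fin n) : List (GV V) :=
  ((List.finRange (n + 2)).erase k.succ.castSucc).map (flagV lo hi π)

theorem mem_restList {lo hi : GV V} {π : Equiv.Perm (Fin (n + 1))} {k : Fin n} {j : Fin (n + 2)}
    (h : j ≠ k.succ.castSucc) : flagV lo hi π j ∈ restList lo hi π k :=
  List.mem_map_of_mem ((List.mem_erase_of_ne h).2 (List.mem_finRange j))

theorem perm_restList (lo hi : GV V) (π : Equiv.Perm (Fin (n + 1))) (k : Fin n) :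
    (flagList lo hi π).Perm (flagV lo hi π k.succ.castSucc :: restList lo hi π k) :=
  (List.perm_cons_erase (List.mem_finRange _)).map (flagV lo hi π)

/-- A flag with its vertex at level `k + 1` removed has two completions to a simplex of the cube, and
the condition on the coordinates `π k` and `π (k + 1)` singles out the one from the flag. -/
theorem flagV_eq_of_between {lo hi : GV V} (hlt : ∀ i, lo i < hi i)
    (π : Equiv.Perm (Fin (n + 1))) (k : Fin n) {v : GV V}
    (h : FormsSimplex V G (v :: restList lo hi π k))
    (ha : v (π k.castSucc) = hi (π k.castSucc)) (hb : v (π k.succ) ≠ hi (π k.succ)) :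
    v = flagV lo hi π k.succ.castSucc := by
  have hin : InCube lo hi v := by
    intro i
    obtain ⟨x, y, -, hxy⟩ := two_values_of_formsSimplex h i
    have h0 := hxy _ (List.mem_cons_of_mem _
      (mem_restList (lo := lo) (hi := hi) (π := π) (k := k) (j := 0) (by simp [Fin.ext_iff])))
    have h1 := hxy _ (List.mem_cons_of_mem _
      (mem_restList (lo := lo) (hi := hi) (π := π) (k := k) (j := Fin.last _)
        (by simp [Fin.ext_iff]; omega)))
    have hv := hxy v List.mem_cons_self
    rw [flagV_zero] at h0
    rw [flagV_last] at h1
    have := (hlt i).ne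
    grind
  have hb' : v (π k.succ) = lo (π k.succ) := (hin _).resolve_right hb
  have h0 : flagV lo hi π k.castSucc.castSucc ≤ v := by
    refine (comparable_of_formsSimplex h List.mem_cons_self (List.mem_cons_of_mem _
      (mem_restList (j := k.castSucc.castSucc) (by simp [Fin.ext_iff])))).resolve_left fun hle => ?_
    have := hle (π k.castSucc)
    rw [ha] at this
    simp [flagV] at this
    exact absurd this (hlt _).not_ge
  have h2 : v ≤ flagV lo hi π k.succ.succ := by
    refine (comparable_of_formsSimplex h List.mem_cons_self (List.mem_cons_of_mem _
      (mem_restList (j := k.succ.succ) (by simp [Fin.ext_iff])))).resolve_right fun hle => ?_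
    have := hle (π k.succ)
    rw [hb'] at this
    simp [flagV] at this
    exact absurd this (hlt _).not_ge
  funext i
  obtain ⟨m, rfl⟩ := π.surjective i
  have e0 := h0 (π m)
  have e2 := h2 (π m)
  have hm := hlt (π m)
  simp only [flagV, Equiv.symm_apply_apply] at e0 e2 ⊢
  rcases lt_trichotomy (m : ℕ) k with hk | hk | hk
  · rw [if_pos (by simp [Fin.lt_def]; omega)] at e0 ⊢
    rcases hin (π m) with h' | h' <;> rw [h'] at e0 ⊢
    exact absurd hm e0.not_gt
  · obtain rfl : m = k.castSucc := Fin.ext hk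
    rw [if_pos (by simp [Fin.lt_def]), ha]
  · rw [if_neg (by simp [Fin.lt_def]; omega)]
    by_cases hk' : (m : ℕ) = k + 1
    · obtain rfl : m = k.succ := Fin.ext hk'
      exact hb'
    · rw [if_neg (by simp [Fin.lt_def]; omega)] at e2
      rcases hin (π m) with h' | h' <;> rw [h'] at e2 ⊢
      exact absurd hm e2.not_gt

open Classical in
theorem sum_between {lo hi : GV V} (hlt : ∀ i, lo i < hi i)
    (π : Equiv.Perm (Fin (n + 1))) (k : Fin n) {a b : Fin (n + 1)} (ha : π k.castSucc = a)
    (hb : π k.succ = b) :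
    (∑ v : GV V, if v a = hi a ∧ v b ≠ hi b then mon V G (v :: restList lo hi π k) else 0) =
      mon V G (flagList lo hi π) := by
  subst ha hb
  rw [mon_perm (perm_restList lo hi π k), Finset.sum_eq_single (flagV lo hi π k.succ.castSucc)]
  · rw [if_pos]
    simp [flagV, (hlt _).ne]
  · intro v _ hv
    split_ifs with h
    · exact mon_eq_zero fun hs => hv (flagV_eq_of_between hlt π k hs h.1 h.2)
    · rfl
  · simp

theorem flagV_swap {lo hi : GV V} (π : Equiv.Perm (Fin (n + 1))) (k : Fin n) {j : Fin (n + 2)}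
    (hj : j ≠ k.succ.castSucc) :
    flagV lo hi (π * Equiv.swap k.castSucc k.succ) j = flagV lo hi π j := by
  have hj' : (j : ℕ) ≠ k + 1 := fun h => hj (Fin.ext (by simpa using h))
  funext i
  obtain ⟨m, rfl⟩ := π.surjective i
  have hs : (π * Equiv.swap k.castSucc k.succ).symm (π m) = Equiv.swap k.castSucc k.succ m := by
    rw [Equiv.symm_apply_eq]
    simp
  simp only [flagV, hs, Equiv.symm_apply_apply]
  congr 1
  rw [Equiv.swap_apply_def]
  simp only [Fin.lt_def, Fin.val_castSucc, eq_iff_iff]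
  split_ifs with h1 h2
  · subst h1; simp; omega
  · subst h2; simp; omega
  · rfl

theorem restList_swap {lo hi : GV V} (π : Equiv.Perm (Fin (n + 1))) (k : Fin n) :
    restList lo hi (π * Equiv.swap k.castSucc k.succ) k = restList lo hi π k :=
  List.map_congr_left fun _ hj => flagV_swap π k
    (fun h => ((List.nodup_finRange _).not_mem_erase) (h ▸ hj))

/-- Two flags differing in one vertex have the same class: it is the difference of the third
relations in the directions `π k` and `π (k + 1)`, multiplied by the common vertices. -/
theorem mon_flagList_swap {lo hi : GV V} (hlt : ∀ i, lo i < hi i)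
    (π : Equiv.Perm (Fin (n + 1))) (k : Fin n) :
    mon V G (flagList lo hi (π * Equiv.swap k.castSucc k.succ)) = mon V G (flagList lo hi π) := by
  classical
  rw [← sum_between hlt π k rfl rfl, ← sum_between hlt (π * Equiv.swap k.castSucc k.succ) k
    (a := π k.succ) (b := π k.castSucc) (by simp) (by simp), restList_swap]
  have hi_mem : hi ∈ restList lo hi π k := by
    have := mem_restList (lo := lo) (hi := hi) (π := π) (k := k) (j := Fin.last _)
      (by simp [Fin.ext_iff]; omega)
    rwa [flagV_last] at this
  have lo_mem : lo ∈ restList lo hi π k := by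
    have := mem_restList (lo := lo) (hi := hi) (π := π) (k := k) (j := 0) (by simp [Fin.ext_iff])
    rwa [flagV_zero] at this
  have ea := sum_mon_fiber_eq_zero (G := G) hi_mem lo_mem (hlt (π k.castSucc)).ne'
  have eb := sum_mon_fiber_eq_zero (G := G) hi_mem lo_mem (hlt (π k.succ)).ne'
  rw [Finset.sum_filter] at ea eb
  -- the terms with `v` at the upper end in both directions cancel in the difference
  rw [← sub_eq_zero, ← Finset.sum_sub_distrib]
  refine Eq.trans ?_ (sub_eq_zero.2 (eb.trans ea.symm))
  rw [← Finset.sum_sub_distrib]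
  refine Finset.sum_congr rfl fun v _ => ?_
  by_cases h1 : v (π k.castSucc) = hi (π k.castSucc) <;>
    by_cases h2 : v (π k.succ) = hi (π k.succ) <;> simp [h1, h2]

end Adjacent

/-- Modulo the relations, the flag monomial of a cube does not depend on the flag. -/
theorem mon_flagList_eq {d : ℕ} {V : Fin d → Type} [∀ i, Fintype (V i)] [∀ i, LinearOrder (V i)]
    {G : ∀ i, SimpleGraph (V i)} {lo hi : GV V} (hlt : ∀ i, lo i < hi i)
    (π : Equiv.Perm (Fin d)) :
    mon V G (flagList lo hi π) = mon V G (flagList lo hi 1) := by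
  rcases d with _ | n
  · rw [Subsingleton.elim π 1]
  · have hπ : π ∈ Submonoid.closure
        (Set.range fun k : Fin n => Equiv.swap k.castSucc k.succ) := by
      rw [Equiv.Perm.mclosure_swap_castSucc_succ]
      trivial
    induction hπ using Submonoid.closure_induction_right with
    | one => rfl
    | mul_right x _ y hy ih =>
      obtain ⟨k, rfl⟩ := hy
      rw [mon_flagList_swap hlt, ih]

/-! ### Flags span the top piece -/

section Span
set_option linter.unusedSectionVars false

variable {d : ℕ} {V : Fin d → Type} [∀ i, Fintype (V i)] [∀ i, LinearOrder (V i)]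
variable {G : ∀ i, SimpleGraph (V i)}

/-- A nondegenerate simplex with `d + 1` vertices is a flag of a cube: each of its `d` steps moves
a coordinate that no other step moves. -/
theorem exists_flag_of_nodup {l : List (GV V)} (hs : FormsSimplex V G l) (hn : l.Nodup)
    (hlen : l.length = d + 1) :
    ∃ lo hi : GV V, (∀ i, lo i < hi i ∧ (G i).Adj (lo i) (hi i)) ∧
      ∃ π, l.Perm (flagList lo hi π) := by
  choose a b hab hval using two_values_of_formsSimplex hs
  obtain ⟨l', hp, hsort⟩ := exists_sorted l
    (fun u hu w hw => comparable_of_formsSimplex hs hu hw)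
  have hlen' : l'.length = d + 1 := hp.length_eq.trans hlen
  have hmono : StrictMono l'.get := by
    intro x y hxy
    exact lt_of_le_of_ne (List.pairwise_iff_get.1 hsort x y hxy)
      fun h => hxy.ne (List.nodup_iff_injective_get.1 (hp.nodup_iff.2 hn) h)
  obtain ⟨σ, hσ⟩ : ∃ σ : Fin (d + 1) → GV V, σ = fun j => l'.get (j.cast hlen'.symm) := ⟨_, rfl⟩
  have hσmono : StrictMono σ := by
    rw [hσ]
    exact fun x y hxy => hmono hxy
  have hl' : l' = List.ofFn σ := by
    rw [hσ]
    exact (List.ofFn_get l').symm.trans (List.ofFn_congr hlen' l'.get)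
  have hσval : ∀ j i, σ j i = a i ∨ σ j i = b i := fun j i =>
    hval i _ (hp.subset (by rw [hσ]; exact List.get_mem _ _))
  have hab' : ∀ i, a i ≤ b i := fun i => (hab i).elim (fun h => h.le) (fun h => h.1.le)
  have hjump : ∀ x y i, σ x i < σ y i → σ x i = a i ∧ σ y i = b i ∧ a i < b i := by
    intro x y i hxy
    have := hab' i
    rcases hσval x i with h1 | h1 <;> rcases hσval y i with h2 | h2 <;> rw [h1, h2] at hxy
    · exact absurd hxy (lt_irrefl _)
    · exact ⟨h1, h2, hxy⟩
    · exact absurd hxy this.not_gt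
    · exact absurd hxy (lt_irrefl _)
  have hex : ∀ j : Fin d, ∃ i, σ j.castSucc i < σ j.succ i := fun j =>
    (Pi.lt_def.1 (hσmono (Fin.castSucc_lt_succ (i := j)))).2
  choose c hc using hex
  have key : ∀ j j' : Fin d, j < j' → c j ≠ c j' := by
    intro j j' hjj h
    have h3 := hσmono.monotone (show j.succ ≤ j'.castSucc from hjj) (c j)
    rw [(hjump _ _ _ (hc j)).2.1, h, (hjump _ _ _ (hc j')).1] at h3
    exact absurd (hjump _ _ _ (hc j')).2.2 h3.not_gt
  have hinj : Function.Injective c := by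
    intro j j' h
    rcases lt_trichotomy j j' with h' | h' | h'
    · exact absurd h (key _ _ h')
    · exact h'
    · exact absurd h.symm (key _ _ h')
  have hbij : Function.Bijective c := Finite.injective_iff_bijective.1 hinj
  have hlt : ∀ i, a i < b i := fun i => by
    obtain ⟨m, rfl⟩ := hbij.2 i
    exact (hjump _ _ _ (hc m)).2.2
  refine ⟨a, b, fun i => ⟨hlt i, ((hab i).resolve_left (hlt i).ne).2⟩,
    Equiv.ofBijective c hbij, ?_⟩
  have hflag : flagV a b (Equiv.ofBijective c hbij) = σ := by
    funext j i
    obtain ⟨m, rfl⟩ := hbij.2 i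
    have hm : (Equiv.ofBijective c hbij).symm (c m) = m :=
      (Equiv.symm_apply_eq _).2 rfl
    obtain ⟨h1, h2, h3⟩ := hjump _ _ _ (hc m)
    rw [flagV, hm]
    split_ifs with h
    · have h4 := hσmono.monotone (show m.succ ≤ j from h) (c m)
      rw [h2] at h4
      exact ((hσval j (c m)).resolve_left fun h5 => (h5 ▸ h4).not_gt h3).symm
    · have h4 := hσmono.monotone (not_lt.1 h) (c m)
      rw [h1] at h4
      exact ((hσval j (c m)).resolve_right fun h5 => (h5 ▸ h4).not_gt h3).symm
  rw [flagList, hflag, ← List.ofFn_eq_map, ← hl']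
  exact hp.symm

theorem mem_of_sum_eq_zero {ι M : Type} [AddCommGroup M] (S : Submodule ℤ M) {s : Finset ι}
    {f : ι → M} (h0 : ∑ x ∈ s, f x = 0) {v : ι} (hv : v ∈ s)
    (h : ∀ x ∈ s, x ≠ v → f x ∈ S) : f v ∈ S := by
  classical
  rw [← Finset.add_sum_erase s f hv] at h0
  rw [eq_neg_of_add_eq_zero_left h0]
  exact S.neg_mem (S.sum_mem fun x hx =>
    h x (Finset.mem_of_mem_erase hx) (Finset.ne_of_mem_erase hx))

open Classical in
/-- A monomial with a repeated vertex is an integral combination of monomials with strictly more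
distinct vertices. -/
theorem mon_mem_of_duplicate (S : Submodule ℤ (Chow V G)) {l : List (GV V)} (hd : ¬ l.Nodup)
    (ih : ∀ l' : List (GV V), l'.length = l.length → l.toFinset.card < l'.toFinset.card →
      mon V G l' ∈ S) : mon V G l ∈ S := by
  by_cases hs : FormsSimplex V G l
  swap
  · rw [mon_eq_zero hs]
    exact S.zero_mem
  obtain ⟨v₀, hdup⟩ := List.exists_duplicate_iff_not_nodup.2 hd
  have hv₀ : v₀ ∈ l := hdup.mem
  have hperm : l.Perm (v₀ :: l.erase v₀) := List.perm_cons_erase hv₀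
  have hmem : ∀ x, x ∈ l.erase v₀ ↔ x ∈ l := by
    intro x
    refine ⟨List.mem_of_mem_erase, fun hx => ?_⟩
    by_cases h : x = v₀
    · subst h
      rw [List.duplicate_iff_two_le_count] at hdup
      rw [← List.count_pos_iff, List.count_erase_self]
      omega
    · exact (List.mem_erase_of_ne h).2 hx
  have hlen : ∀ x, (x :: l.erase v₀).length = l.length := fun x => by
    rw [hperm.length_eq, List.length_cons, List.length_cons]
  have hnew : ∀ x, x ∉ l → mon V G (x :: l.erase v₀) ∈ S := by
    intro x hx
    refine ih _ (hlen x) (Finset.card_lt_card (Finset.ssubset_iff_subset_ne.2 ⟨?_, ?_⟩))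
    · intro y hy
      simp only [List.mem_toFinset, List.mem_cons, hmem] at hy ⊢
      exact Or.inr hy
    · intro h
      apply hx
      rw [← List.mem_toFinset, h]
      simp
  have hcomp : ∀ x ∈ l, ∀ y ∈ l, x ≤ y ∨ y ≤ x :=
    fun x hx y hy => comparable_of_formsSimplex hs hx hy
  rw [mon_perm hperm]
  -- induction along the chain `l` on the vertex in the position of the repeated factor
  suffices H : ∀ v : GV V, v ∈ l → mon V G (v :: l.erase v₀) ∈ S from H v₀ hv₀
  intro v
  induction v using WellFoundedLT.induction with
  | ind v ihv =>
    intro hv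
    -- at the top of the chain the second relation, below it the third one at a coordinate `i`
    -- where `v` differs from its successor `w`, trades `v` for smaller or new vertices
    by_cases hmax : ∀ x ∈ l, x ≤ v
    · refine mem_of_sum_eq_zero S (sum_mon_eq_zero ((hmem v).2 hv)) (Finset.mem_univ v)
        fun x _ hxv => ?_
      by_cases hx : x ∈ l
      · exact ihv x (lt_of_le_of_ne (hmax x hx) hxv) hx
      · exact hnew x hx
    · push Not at hmax
      obtain ⟨w₀, hw₀, hwv⟩ := hmax
      have hne : (l.toFinset.filter (fun x => v < x)).Nonempty := by
        refine ⟨w₀, ?_⟩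
        rw [Finset.mem_filter, List.mem_toFinset]
        exact ⟨hw₀, lt_of_le_not_ge ((hcomp w₀ hw₀ v hv).resolve_left hwv) hwv⟩
      obtain ⟨w, hw⟩ := Finset.exists_minimal hne
      have hwm := hw.prop
      rw [Finset.mem_filter, List.mem_toFinset] at hwm
      obtain ⟨i, hi⟩ := (Pi.lt_def.1 hwm.2).2
      refine mem_of_sum_eq_zero S
        (sum_mon_fiber_eq_zero ((hmem v).2 hv) ((hmem w).2 hwm.1) hi.ne) (v := v) (by simp)
        fun x hxi hxv => ?_
      rw [Finset.mem_filter] at hxi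
      by_cases hx : x ∈ l
      · refine ihv x (lt_of_le_of_ne ((hcomp x hx v hv).resolve_right fun hvx => ?_) hxv) hx
        have hvx' : v < x := lt_of_le_of_ne hvx hxv.symm
        have hwx : w ≤ x := by
          rcases hcomp w hwm.1 x hx with h | h
          · exact h
          · exact hw.le_of_le (by simpa using ⟨hx, hvx'⟩) h
        have := hwx i
        rw [hxi.2] at this
        exact absurd hi this.not_gt
      · exact hnew x hx

/-- The lower endpoints of a tuple of edges. -/
def elo (e : ∀ i, EdgeT V G i) : GV V := fun i => (e i).1.1

/-- The upper endpoints of a tuple of edges. -/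
def ehi (e : ∀ i, EdgeT V G i) : GV V := fun i => (e i).1.2

theorem elo_lt_ehi (e : ∀ i, EdgeT V G i) (i : Fin d) : elo e i < ehi e i := (e i).2.1

theorem adj_elo_ehi (e : ∀ i, EdgeT V G i) (i : Fin d) : (G i).Adj (elo e i) (ehi e i) :=
  (e i).2.2

/-- The top-degree class attached to the cube `□_e`: the product of the vertices of its standard flag. -/
noncomputable def gen (e : ∀ i, EdgeT V G i) : Chow V G := mon V G (flagList (elo e) (ehi e) 1)

theorem mon_mem_span (l : List (GV V)) (hlen : l.length = d + 1) :
    mon V G l ∈ Submodule.span ℤ (Set.range (gen (V := V) (G := G))) := by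
  classical
  induction hk : d + 1 - l.toFinset.card using Nat.strong_induction_on generalizing l with
  | _ k ih =>
    by_cases hn : l.Nodup
    · by_cases hs : FormsSimplex V G l
      · obtain ⟨lo, hi, he, π, hp⟩ := exists_flag_of_nodup hs hn hlen
        rw [mon_perm hp, mon_flagList_eq fun i => (he i).1]
        exact Submodule.subset_span ⟨fun i => ⟨(lo i, hi i), he i⟩, rfl⟩
      · rw [mon_eq_zero hs]
        exact Submodule.zero_mem _
    · refine mon_mem_of_duplicate _ hn fun l' hl' hcard => ih _ ?_ l' (hl'.trans hlen) rfl
      have := List.toFinset_card_le l'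
      omega

theorem isHomogeneous_prod_map_X (l : List (GV V)) :
    ((l.map (X (R := ℤ))).prod).IsHomogeneous l.length := by
  induction l with
  | nil => exact isHomogeneous_one _ _
  | cons v l ih =>
    rw [List.map_cons, List.prod_cons, List.length_cons, add_comm]
    exact (isHomogeneous_X ℤ v).mul ih

theorem mkChow_mem_of_isHomogeneous (S : Submodule ℤ (Chow V G)) {N : ℕ}
    (h : ∀ l : List (GV V), l.length = N → mon V G l ∈ S) {p : MvPolynomial (GV V) ℤ}
    (hp : p.IsHomogeneous N) : mkChow V G p ∈ S := by
  classical
  rw [p.as_sum, map_sum]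
  refine S.sum_mem fun s hs => ?_
  have h1 : monomial s (coeff s p) = coeff s p • (s.toMultiset.toList.map X).prod := by
    rw [monomial_eq, smul_eq_C_mul, ← Multiset.prod_coe, ← Multiset.map_coe, Multiset.coe_toList,
      Finsupp.toMultiset_map, Finsupp.prod_toMultiset, Finsupp.prod_mapDomain_index]
    · simp
    · simp [pow_add]
  rw [h1, map_zsmul]
  refine S.smul_mem _ (h _ ?_)
  rw [Multiset.length_toList, Finsupp.card_toMultiset]
  have := hp (mem_support_iff.1 hs)
  rw [← this]
  simp [Finsupp.weight_apply, Finsupp.sum]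

variable (V G) in
theorem chowPiece_eq_span :
    chowPiece V G (d + 1) = Submodule.span ℤ (Set.range (gen (V := V) (G := G))) := by
  apply le_antisymm
  · rintro _ ⟨p, hp, rfl⟩
    exact mkChow_mem_of_isHomogeneous _ mon_mem_span ((mem_homogeneousSubmodule _ _).1 hp)
  · rw [Submodule.span_le]
    rintro _ ⟨e, rfl⟩
    refine ⟨_, (mem_homogeneousSubmodule _ _).2 ?_, rfl⟩
    have := isHomogeneous_prod_map_X (flagList (elo e) (ehi e) 1)
    simpa [flagList] using this

/-! ### Degrees on the cubes -/

/-- The degree functional on the Chow ring of `{0,1}^d`, normalised to be `1` on the standard flag.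
It is a choice among the functionals with this value; they agree in top degree. -/
noncomputable def degree (d : ℕ) : CubeRing d →ₗ[ℤ] ℤ := Classical.choose (exists_degree d)

/-- The degree of the restriction of a class of `Chow(𝒢)` to the cube `□_e`. -/
noncomputable def edgeDegree (e : ∀ i, EdgeT V G i) : Chow V G →ₗ[ℤ] ℤ :=
  degree d ∘ₗ (Ideal.Quotient.liftₐ (Irat V G) (toCube (elo e) (ehi e))
    fun _ hp => toCube_eq_zero (elo_lt_ehi e) (adj_elo_ehi e) hp).toLinearMap

theorem edgeDegree_mkChow (e : ∀ i, EdgeT V G i) (p : MvPolynomial (GV V) ℤ) :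
    edgeDegree e (mkChow V G p) = degree d (toCube (elo e) (ehi e) p) := rfl

theorem edgeDegree_gen_self (e : ∀ i, EdgeT V G i) : edgeDegree e (gen e) = 1 := by
  rw [gen, mon, edgeDegree_mkChow, toCube_flag (elo_lt_ehi e)]
  exact Classical.choose_spec (exists_degree d)

/-- The first and last vertices of the flag of `□_{e'}` determine `e'`, so they cannot both lie
in another cube. -/
theorem edgeDegree_gen_of_ne {e e' : ∀ i, EdgeT V G i} (h : e ≠ e') :
    edgeDegree e (gen e') = 0 := by
  rw [gen, mon, edgeDegree_mkChow, toCube_flag_of_not, map_zero]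
  rintro ⟨h1, h2⟩
  apply h
  funext i
  have hlt := elo_lt_ehi e i
  have hlt' := elo_lt_ehi e' i
  apply Subtype.ext
  apply Prod.ext
  · change elo e i = elo e' i
    have := h1 i
    have := h2 i
    grind
  · change ehi e i = ehi e' i
    have := h1 i
    have := h2 i
    grind

end Span

/-! ### Restriction to the cubes -/

section Final
set_option linter.unusedSectionVars false

variable {d : ℕ} {V : Fin d → Type} [∀ i, Fintype (V i)] [∀ i, LinearOrder (V i)]
variable {G : ∀ i, SimpleGraph (V i)}

open Classical in
theorem edgeDegree_gen (e e' : ∀ i, EdgeT V G i) :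
    edgeDegree e (gen e') = if e = e' then 1 else 0 := by
  split_ifs with h
  · rw [← h, edgeDegree_gen_self]
  · exact edgeDegree_gen_of_ne h

theorem edgeDegree_sum_gen [Fintype (∀ i, EdgeT V G i)] (c : (∀ i, EdgeT V G i) → ℤ)
    (e : ∀ i, EdgeT V G i) : edgeDegree e (∑ e', c e' • gen e') = c e := by
  classical
  simp only [map_sum, map_smul, edgeDegree_gen, smul_eq_mul, mul_ite, mul_one, mul_zero,
    Finset.sum_ite_eq, Finset.mem_univ, if_true]

theorem eq_sum_gen {x : Chow V G} [Fintype (∀ i, EdgeT V G i)]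
    (hx : x ∈ chowPiece V G (d + 1)) : x = ∑ e, edgeDegree e x • gen e := by
  classical
  rw [chowPiece_eq_span, Submodule.mem_span_range_iff_exists_fun] at hx
  obtain ⟨c, rfl⟩ := hx
  exact Finset.sum_congr rfl fun e _ => by rw [edgeDegree_sum_gen]

theorem mkChow_mem_chowPiece {p : MvPolynomial (GV V) ℤ} {N : ℕ} (hp : p.IsHomogeneous N) :
    mkChow V G p ∈ chowPiece V G N := ⟨p, (mem_homogeneousSubmodule _ _).2 hp, rfl⟩

/-- The vertex sets of the factors of the cube `□_e`. -/
abbrev CubeV (e : ∀ i, EdgeT V G i) : Fin d → Type := fun i => SubV V (cubeSet V G e) i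

/-- The factors of the cube `□_e`: the single edges `e i`. -/
abbrev CubeG (e : ∀ i, EdgeT V G i) : ∀ i, SimpleGraph (CubeV e i) :=
  fun i => SubG V G (cubeSet V G e) i

theorem mem_cubeSet_iff (e : ∀ i, EdgeT V G i) (v : GV V) :
    (∀ i, v i ∈ cubeSet V G e i) ↔ InCube (elo e) (ehi e) v := by
  simp [InCube, cubeSet, elo, ehi]

/-- The tuple `e`, seen as a tuple of edges of the cube `□_e`. -/
def topEdge (e : ∀ i, EdgeT V G i) : ∀ i, EdgeT (CubeV e) (CubeG e) i := fun i =>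
  ⟨(⟨(e i).1.1, by simp [cubeSet]⟩, ⟨(e i).1.2, by simp [cubeSet]⟩), (e i).2.1, (e i).2.2⟩

theorem eq_topEdge (e : ∀ i, EdgeT V G i) (f : ∀ i, EdgeT (CubeV e) (CubeG e) i) :
    f = topEdge e := by
  funext i
  obtain ⟨⟨⟨x, hx⟩, ⟨y, hy⟩⟩, h1, h2⟩ := f i
  have hlt := (e i).2.1
  have hxy : x < y := h1
  simp only [cubeSet, Finset.mem_insert, Finset.mem_singleton] at hx hy
  have hx' : x = (e i).1.1 := by
    refine hx.resolve_right fun h => ?_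
    rcases hy with h' | h' <;> rw [h, h'] at hxy
    · exact hxy.not_gt hlt
    · exact lt_irrefl _ hxy
  have hy' : y = (e i).1.2 := hy.resolve_left fun h => by
    rw [hx', h] at hxy
    exact lt_irrefl _ hxy
  exact Subtype.ext (Prod.ext (Subtype.ext hx') (Subtype.ext hy'))

theorem toCube_resTop (e : ∀ i, EdgeT V G i) (p : MvPolynomial (GV V) ℤ) :
    toCube (elo (topEdge e)) (ehi (topEdge e)) (resTop V (cubeSet V G e) p) =
      toCube (elo e) (ehi e) p := by
  classical
  suffices H : (toCube (elo (topEdge e)) (ehi (topEdge e))).comp (resTop V (cubeSet V G e)) =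
      toCube (elo e) (ehi e) from DFunLike.congr_fun H p
  apply MvPolynomial.algHom_ext
  intro v
  rw [AlgHom.comp_apply, resTop, aeval_X, toCube_X]
  by_cases h : ∀ i, v i ∈ cubeSet V G e i
  · have h' := (mem_cubeSet_iff e v).1 h
    rw [dif_pos h, toCube_X, if_pos h', if_pos]
    · congr 1
      funext i
      simp only [bits, decide_eq_decide]
      exact Subtype.ext_iff
    · exact fun i => (h' i).imp Subtype.ext Subtype.ext
  · rw [dif_neg h, map_zero, if_neg fun h' => h ((mem_cubeSet_iff e v).2 h')]

theorem isHomogeneous_resTop (S : ∀ i, Finset (V i)) {p : MvPolynomial (GV V) ℤ} {N : ℕ}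
    (hp : p.IsHomogeneous N) : (resTop V S p).IsHomogeneous N := by
  rw [← one_mul N]
  refine hp.aeval _ fun v => ?_
  split_ifs
  · exact isHomogeneous_X _ _
  · exact isHomogeneous_zero _ _ _

theorem chowPiece_cube (e : ∀ i, EdgeT V G i) :
    chowPiece (CubeV e) (CubeG e) (d + 1) = Submodule.span ℤ {gen (topEdge e)} := by
  let _ : Unique (∀ i, EdgeT (CubeV e) (CubeG e) i) := ⟨⟨topEdge e⟩, eq_topEdge e⟩
  rw [chowPiece_eq_span, Set.range_unique]
  rfl

/-- In top degree, restriction to the cube `□_e` is given by the degree on `□_e`. -/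
theorem mkChow_resTop (e : ∀ i, EdgeT V G i) {p : MvPolynomial (GV V) ℤ}
    (hp : p.IsHomogeneous (d + 1)) :
    mkChow (CubeV e) (CubeG e) (resTop V (cubeSet V G e) p) =
      edgeDegree e (mkChow V G p) • gen (topEdge e) := by
  have h := mkChow_mem_chowPiece (G := CubeG e) (isHomogeneous_resTop (cubeSet V G e) hp)
  rw [chowPiece_cube, Submodule.mem_span_singleton] at h
  obtain ⟨c, hc⟩ := h
  have h2 := congrArg (edgeDegree (topEdge e)) hc
  rw [map_smul, edgeDegree_gen_self, edgeDegree_mkChow, toCube_resTop, ← edgeDegree_mkChow,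
    smul_eq_mul, mul_one] at h2
  rw [← hc, h2]

theorem smul_gen_eq_zero (e : ∀ i, EdgeT V G i) {n : ℤ} (h : n • gen e = 0) : n = 0 := by
  have h2 := congrArg (edgeDegree e) h
  rwa [map_smul, edgeDegree_gen_self, smul_eq_mul, mul_one, map_zero] at h2

variable (V G) in
theorem nonempty_equiv :
    Nonempty (chowPiece V G (d + 1) ≃ₗ[ℤ] ((∀ i, EdgeT V G i) → ℤ)) := by
  classical
  have := fun i => Fintype.ofFinite (EdgeT V G i)
  refine ⟨LinearEquiv.ofBijective
    ((LinearMap.pi fun e => edgeDegree e) ∘ₗ (chowPiece V G (d + 1)).subtype) ⟨?_, ?_⟩⟩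
  · intro x y hxy
    apply Subtype.ext
    rw [eq_sum_gen x.2, eq_sum_gen y.2]
    exact Finset.sum_congr rfl fun e _ => congrArg (· • gen e) (congrFun hxy e)
  · intro m
    refine ⟨⟨∑ e, m e • gen e, ?_⟩, ?_⟩
    · rw [chowPiece_eq_span]
      exact Submodule.sum_mem _ fun e _ =>
        Submodule.smul_mem _ _ (Submodule.subset_span ⟨e, rfl⟩)
    · funext e
      exact edgeDegree_sum_gen m e

end Final

end ChowAux

/-- The top graded piece `Chow^{d+1}(𝒢)` is a free `ℤ`-module of rank
`|E_1|⋯|E_d| = |ℰ|`, i.e. `Chow^{d+1}(𝒢) ≅ ℤ^{|ℰ|}`: each cube's top graded piece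
`Chow^{d+1}(□_e)` is free of rank one, and, for any choice of generators of these,
the restriction maps to the cubes identify `Chow^{d+1}(𝒢)` with `ℤ^{ℰ}`. -/
theorem ChowGS.top_piece_free_of_rank_card_edges
    {d : ℕ} (hd : 1 ≤ d)
    (V : Fin d → Type) [∀ i, Fintype (V i)] [∀ i, LinearOrder (V i)]
    (G : ∀ i, SimpleGraph (V i)) (hconn : ∀ i, (G i).Connected) :
    -- each `Chow^{d+1}(□_e)` is free of rank one
    (∀ e : ∀ i, ChowGS.EdgeT V G i,
      ∃ g : MvPolynomial (∀ i, ChowGS.SubV V (ChowGS.cubeSet V G e) i) ℤ,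
        ChowGS.chowPiece (fun i => ChowGS.SubV V (ChowGS.cubeSet V G e) i)
            (fun i => ChowGS.SubG V G (ChowGS.cubeSet V G e) i) (d + 1) =
          Submodule.span ℤ
            {ChowGS.mkChow (fun i => ChowGS.SubV V (ChowGS.cubeSet V G e) i)
              (fun i => ChowGS.SubG V G (ChowGS.cubeSet V G e) i) g} ∧
        ∀ n : ℤ, n • ChowGS.mkChow (fun i => ChowGS.SubV V (ChowGS.cubeSet V G e) i)
            (fun i => ChowGS.SubG V G (ChowGS.cubeSet V G e) i) g = 0 → n = 0) ∧
    -- for any family of generators, the restriction maps give a bijection between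
    -- `Chow^{d+1}(𝒢)` and `ℤ^{ℰ}`
    (∀ g : (e : ∀ i, ChowGS.EdgeT V G i) →
        MvPolynomial (∀ i, ChowGS.SubV V (ChowGS.cubeSet V G e) i) ℤ,
      (∀ e, ChowGS.chowPiece (fun i => ChowGS.SubV V (ChowGS.cubeSet V G e) i)
            (fun i => ChowGS.SubG V G (ChowGS.cubeSet V G e) i) (d + 1) =
          Submodule.span ℤ
            {ChowGS.mkChow (fun i => ChowGS.SubV V (ChowGS.cubeSet V G e) i)
              (fun i => ChowGS.SubG V G (ChowGS.cubeSet V G e) i) (g e)} ∧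
        ∀ n : ℤ, n • ChowGS.mkChow (fun i => ChowGS.SubV V (ChowGS.cubeSet V G e) i)
            (fun i => ChowGS.SubG V G (ChowGS.cubeSet V G e) i) (g e) = 0 → n = 0) →
      (∀ p : MvPolynomial (ChowGS.GV V) ℤ, p.IsHomogeneous (d + 1) →
        ∃! m : (∀ i, ChowGS.EdgeT V G i) → ℤ, ∀ e,
          ChowGS.mkChow (fun i => ChowGS.SubV V (ChowGS.cubeSet V G e) i)
              (fun i => ChowGS.SubG V G (ChowGS.cubeSet V G e) i)
              (ChowGS.resTop V (ChowGS.cubeSet V G e) p) =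
            m e • ChowGS.mkChow (fun i => ChowGS.SubV V (ChowGS.cubeSet V G e) i)
              (fun i => ChowGS.SubG V G (ChowGS.cubeSet V G e) i) (g e)) ∧
      (∀ m : (∀ i, ChowGS.EdgeT V G i) → ℤ,
        ∃ p : MvPolynomial (ChowGS.GV V) ℤ, p.IsHomogeneous (d + 1) ∧ ∀ e,
          ChowGS.mkChow (fun i => ChowGS.SubV V (ChowGS.cubeSet V G e) i)
              (fun i => ChowGS.SubG V G (ChowGS.cubeSet V G e) i)
              (ChowGS.resTop V (ChowGS.cubeSet V G e) p) =
            m e • ChowGS.mkChow (fun i => ChowGS.SubV V (ChowGS.cubeSet V G e) i)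
              (fun i => ChowGS.SubG V G (ChowGS.cubeSet V G e) i) (g e)) ∧
      (∀ p q : MvPolynomial (ChowGS.GV V) ℤ,
        p.IsHomogeneous (d + 1) → q.IsHomogeneous (d + 1) →
        (∀ e, ChowGS.mkChow (fun i => ChowGS.SubV V (ChowGS.cubeSet V G e) i)
            (fun i => ChowGS.SubG V G (ChowGS.cubeSet V G e) i)
            (ChowGS.resTop V (ChowGS.cubeSet V G e) p) =
          ChowGS.mkChow (fun i => ChowGS.SubV V (ChowGS.cubeSet V G e) i)
            (fun i => ChowGS.SubG V G (ChowGS.cubeSet V G e) i)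
            (ChowGS.resTop V (ChowGS.cubeSet V G e) q)) →
        ChowGS.mkChow V G p = ChowGS.mkChow V G q)) ∧
    -- in particular `Chow^{d+1}(𝒢) ≅ ℤ^{|ℰ|}` as a `ℤ`-module
    Nonempty ((ChowGS.chowPiece V G (d + 1)) ≃ₗ[ℤ] ((∀ i, ChowGS.EdgeT V G i) → ℤ)) := by
  classical
  have := fun i => Fintype.ofFinite (ChowGS.EdgeT V G i)
  refine ⟨fun e => ?_, fun g hg => ?_, ChowAux.nonempty_equiv V G⟩
  · exact ⟨_, ChowAux.chowPiece_cube e, fun n hn => ChowAux.smul_gen_eq_zero _ hn⟩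
  -- each given generator differs from the flag class of its cube by a unit of `ℤ`
  have hab : ∀ e, ∃ a b : ℤ, a * b = 1 ∧
      ChowAux.gen (ChowAux.topEdge e) = a • ChowGS.mkChow _ _ (g e) ∧
      ChowGS.mkChow _ _ (g e) = b • ChowAux.gen (ChowAux.topEdge e) := by
    intro e
    have hspan := (ChowAux.chowPiece_cube e).symm.trans (hg e).1
    obtain ⟨a, ha⟩ := Submodule.mem_span_singleton.1
      (hspan ▸ Submodule.mem_span_singleton_self (ChowAux.gen (ChowAux.topEdge e)))
    obtain ⟨b, hb⟩ := Submodule.mem_span_singleton.1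
      (hspan.symm ▸ Submodule.mem_span_singleton_self (ChowGS.mkChow _ _ (g e)))
    refine ⟨a, b, ?_, ha.symm, hb.symm⟩
    rw [← sub_eq_zero]
    refine ChowAux.smul_gen_eq_zero (ChowAux.topEdge e) ?_
    rw [sub_smul, mul_smul, hb, ha, one_smul, sub_self]
  choose a b hab hga hgb using hab
  refine ⟨fun p hp => ?_, fun m => ?_, fun p q hp hq hpq => ?_⟩
  · refine ⟨fun e => ChowAux.edgeDegree e (ChowGS.mkChow V G p) * a e, fun e => ?_,
      fun m hm => funext fun e => ?_⟩
    · rw [mul_smul, ← hga, ChowAux.mkChow_resTop e hp]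
    · have h := hm e
      rw [ChowAux.mkChow_resTop e hp, hga, ← mul_smul] at h
      rw [← sub_eq_zero]
      refine (hg e).2 _ ?_
      rw [sub_smul, h, sub_self]
  · have hmem : ∑ e, (m e * b e) • ChowAux.gen e ∈ ChowGS.chowPiece V G (d + 1) := by
      rw [ChowAux.chowPiece_eq_span]
      exact Submodule.sum_mem _ fun e _ =>
        Submodule.smul_mem _ _ (Submodule.subset_span ⟨e, rfl⟩)
    obtain ⟨p, hp, hpm⟩ := hmem
    have hp' := (mem_homogeneousSubmodule _ _).1 hp
    have hpm' : ChowGS.mkChow V G p = ∑ e, (m e * b e) • ChowAux.gen e := hpm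
    refine ⟨p, hp', fun e => ?_⟩
    rw [ChowAux.mkChow_resTop e hp', hpm', ChowAux.edgeDegree_sum_gen, hgb e, ← mul_smul]
  · rw [ChowAux.eq_sum_gen (ChowAux.mkChow_mem_chowPiece (G := G) hp),
      ChowAux.eq_sum_gen (ChowAux.mkChow_mem_chowPiece (G := G) hq)]
    refine Finset.sum_congr rfl fun e _ => congrArg (· • ChowAux.gen e) ?_
    have h := hpq e
    rw [ChowAux.mkChow_resTop e hp, ChowAux.mkChow_resTop e hq, ← sub_eq_zero, ← sub_smul] at h
    exact sub_eq_zero.1 (ChowAux.smul_gen_eq_zero _ h)
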